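/- Let γ ≤ 0, α ≤ γ, β ≤ 0, and let F = (F_x)_{x∈ℝ^d} be an (α,γ)-coherent germ with global homogeneity bound β (i.e., the coherence condition holds with exponent α on every compact set, and |F_x(φ_x^ε)| ≲ ε^β uniformly on compacts). Then there exists a distribution f ∈ D'(ℝ^d) such that for every compact K and integer r > max{−α, −β}, one has |(f − F_x)(ψ_x^λ)| ≲ λ^γ (if γ < 0) or ≲ 1 + |log λ| (if γ = 0), uniformly for ψ ∈ B_r, x ∈ K, λ ∈ (0,1]. Moreover f can be chosen so that F ↦ f is linear on the vector space of such germs. -/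

import Mathlib

open MeasureTheory Metric Set Filter

noncomputable section

abbrev Ed (d : ℕ) := EuclideanSpace ℝ (Fin d)

/-- Test functions: smooth compactly supported functions on ℝ^d. -/
def IsTestFunction {d : ℕ} (φ : Ed d → ℝ) : Prop :=
  ContDiff ℝ (⊤ : ℕ∞) φ ∧ HasCompactSupport φ

/-- The scaled test function `φ_x^λ(z) = λ^{-d} φ(λ⁻¹(z - x))`. -/
def scaled {d : ℕ} (φ : Ed d → ℝ) (x : Ed d) (l : ℝ) : Ed d → ℝ :=
  fun z => (l ^ d)⁻¹ * φ (l⁻¹ • (z - x))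

/-- The `C^r` norm: sup of the norms of the iterated derivatives of order ≤ r. -/
def Cnorm {d : ℕ} (r : ℕ) (φ : Ed d → ℝ) : ℝ :=
  ⨆ i : Fin (r + 1), ⨆ x : Ed d, ‖iteratedFDeriv ℝ (i : ℕ) φ x‖

/-- The family `B_r` of test functions supported in `B(0,1)` with `C^r` norm at most 1. -/
def Br {d : ℕ} (r : ℕ) (ψ : Ed d → ℝ) : Prop :=
  IsTestFunction ψ ∧ tsupport ψ ⊆ closedBall (0 : Ed d) 1 ∧ Cnorm r ψ ≤ 1

/-- A linear functional is a distribution if on every compact set it is bounded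
by some `C^r` norm. -/
def IsDistribution {d : ℕ} (T : (Ed d → ℝ) →ₗ[ℝ] ℝ) : Prop :=
  ∀ K : Set (Ed d), IsCompact K → ∃ r : ℕ, ∃ C : ℝ,
    ∀ φ : Ed d → ℝ, IsTestFunction φ → tsupport φ ⊆ K → |T φ| ≤ C * Cnorm r φ

/-- A germ: a measurable family of distributions. -/
def IsGerm {d : ℕ} (F : Ed d → ((Ed d → ℝ) →ₗ[ℝ] ℝ)) : Prop :=
  (∀ x, IsDistribution (F x)) ∧
  ∀ ψ : Ed d → ℝ, IsTestFunction ψ → Measurable fun x => F x ψ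

/-- Monomial `y^k` for a multi-index `k`. -/
def mono {d : ℕ} (k : Fin d → ℕ) (y : Ed d) : ℝ := ∏ i, (y i) ^ (k i)

/-- Convolution of two functions. -/
def conv {d : ℕ} (f g : Ed d → ℝ) : Ed d → ℝ := fun x => ∫ y, f (x - y) * g y

/-- `rIndex α` is the smallest integer `r > -α` (for `α ≤ 0`). -/
def rIndex (α : ℝ) : ℕ := Nat.floor (-α) + 1

/-- Negative Hölder space condition `T ∈ C^α` for `α ≤ 0`. -/
def HolderNeg {d : ℕ} (α : ℝ) (T : (Ed d → ℝ) →ₗ[ℝ] ℝ) : Prop :=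
  ∀ K : Set (Ed d), IsCompact K → ∃ C : ℝ, ∀ x ∈ K, ∀ ε ∈ Set.Ioc (0:ℝ) 1,
    ∀ ψ : Ed d → ℝ, Br (rIndex α) ψ → |T (scaled ψ x ε)| ≤ C * ε ^ α

/-- `(α,γ)`-coherence of a germ with respect to the test function φ. -/
def AlphaGammaCoherent {d : ℕ} (α γ : ℝ) (F : Ed d → ((Ed d → ℝ) →ₗ[ℝ] ℝ))
    (φ : Ed d → ℝ) : Prop :=
  ∀ K : Set (Ed d), IsCompact K → ∃ C : ℝ, ∀ y ∈ K, ∀ z ∈ K, ∀ ε ∈ Set.Ioc (0:ℝ) 1,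
    |F z (scaled φ y ε) - F y (scaled φ y ε)| ≤ C * ε ^ α * (‖z - y‖ + ε) ^ (γ - α)

/-- Global homogeneity bound β for a germ with respect to the test function φ. -/
def HomBound {d : ℕ} (β : ℝ) (F : Ed d → ((Ed d → ℝ) →ₗ[ℝ] ℝ)) (φ : Ed d → ℝ) : Prop :=
  ∀ K : Set (Ed d), IsCompact K → ∃ C : ℝ, ∀ x ∈ K, ∀ ε ∈ Set.Ioc (0:ℝ) 1,
    |F x (scaled φ x ε)| ≤ C * ε ^ β

/-!
Replace `φ` by a linear combination `k` of its rescalings with integral one and vanishing moments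
of orders `1, …, r - 1`; coherence passes from `φ` to `k`, and `k_ε * g - g = O(ε ^ r)` for every
test function `g`. With `kₙ` the rescaling of `k` by `2⁻ⁿ` and `hₙ = k_{n+1} * g - k_{n-1} * g`
(`h₀ = k₁ * g`), the telescoping sum `∑ n ≤ N, kₙ * hₙ = k_N * k_{N+1} * g` tends to `g`. The
reconstruction tested against `g` is the limit of `∑ n ≤ N, ∫ F_y(kₙ(· - y)) hₙ(y) dy`. If `F_y`
were a fixed distribution `F_x`, this limit would be `F_x(g)`, so the error is the sum of the
integrals of `(F_y - F_x)(kₙ(· - y)) hₙ(y)`.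

For `g = ψ_x^λ`, coherence and the uniform `L¹` bound on `hₙ` give errors of order `2^{-nγ}` at the
scales `2⁻ⁿ ≥ λ`; at the scales `2⁻ⁿ ≤ λ` the vanishing moments improve the `L¹` bound to
`(2⁻ⁿ / λ) ^ r`, and the errors are of order `2^{-n(α + r)} λ^{γ - α - r}`. Both sums are geometric
and of order `λ^γ`, except that for `γ = 0` each of the roughly `|log λ|` coarse scales contributes
equally. As limits are unique, the construction is linear in the germ.
-/

open Topology
open scoped ContDiff Convolution BoundedContinuousFunction

section Convolution

variable {E W : Type*} [NormedAddCommGroup E] [NormedSpace ℝ E] [MeasurableSpace E] [BorelSpace E]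
  [NormedAddCommGroup W] [NormedSpace ℝ W]

theorem map_fderiv_convolution_lsmul {W' : Type*} [NormedAddCommGroup W'] [NormedSpace ℝ W']
    {μ : Measure E} [SFinite μ] [μ.IsAddLeftInvariant] {f : E → ℝ} {g : E → W}
    (e : (E →L[ℝ] W) ≃ₗᵢ[ℝ] W') (hf : LocallyIntegrable f μ) (hcg : HasCompactSupport g)
    (hg : ContDiff ℝ 1 g) (x : E) :
    e (fderiv ℝ (f ⋆[ContinuousLinearMap.lsmul ℝ ℝ, μ] g) x) =
      (f ⋆[ContinuousLinearMap.lsmul ℝ ℝ, μ] fun x => e (fderiv ℝ g x)) x := by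
  rw [(hcg.hasFDerivAt_convolution_right (ContinuousLinearMap.lsmul ℝ ℝ) hf hg x).fderiv]
  exact (e.toContinuousLinearEquiv.integral_comp_comm fun y => f y • fderiv ℝ g (x - y)).symm.trans
    (integral_congr_ae (.of_forall fun y => map_smul e (f y) (fderiv ℝ g (x - y))))

theorem iteratedFDeriv_convolution_lsmul {μ : Measure E} [SFinite μ] [μ.IsAddLeftInvariant]
    {f : E → ℝ} {g : E → W} (hf : LocallyIntegrable f μ) (hcg : HasCompactSupport g) (n : ℕ)
    (hg : ContDiff ℝ n g) :
    iteratedFDeriv ℝ n (f ⋆[ContinuousLinearMap.lsmul ℝ ℝ, μ] g) =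
      f ⋆[ContinuousLinearMap.lsmul ℝ ℝ, μ] iteratedFDeriv ℝ n g := by
  induction n with
  | zero =>
    ext1 x
    let curry := (continuousMultilinearCurryFin0 ℝ E W).symm.toContinuousLinearEquiv
    exact (curry.integral_comp_comm fun y => f y • g (x - y)).symm.trans
      (integral_congr_ae (.of_forall fun y => map_smul curry (f y) (g (x - y))))
  | succ n ih =>
    ext1 x
    have hg_deriv : ContDiff ℝ 1 (iteratedFDeriv ℝ n g) :=
      hg.iteratedFDeriv_right (by norm_cast; rw [add_comm])
    rw [iteratedFDeriv_succ_eq_comp_left, ih (hg.of_le (by norm_cast; exact n.le_succ))]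
    exact map_fderiv_convolution_lsmul
      (continuousMultilinearCurryLeftEquiv ℝ (fun _ : Fin (n + 1) => E) W).symm
      hf (hcg.iteratedFDeriv n) hg_deriv x

end Convolution

section TestFunctions

variable {d : ℕ} {g h k : Ed d → ℝ}

namespace IsTestFunction

theorem contDiff_nat (hg : IsTestFunction g) (n : ℕ) : ContDiff ℝ n g :=
  contDiff_infty.1 hg.1 n

theorem continuous (hg : IsTestFunction g) : Continuous g := hg.1.continuous

theorem integrable (hg : IsTestFunction g) : Integrable g :=
  hg.continuous.integrable_of_hasCompactSupport hg.2

theorem zero : IsTestFunction (0 : Ed d → ℝ) := ⟨contDiff_const, HasCompactSupport.zero⟩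

theorem add (hg : IsTestFunction g) (hh : IsTestFunction h) : IsTestFunction (g + h) :=
  ⟨hg.1.add hh.1, hg.2.add hh.2⟩

theorem sub (hg : IsTestFunction g) (hh : IsTestFunction h) : IsTestFunction (g - h) :=
  ⟨hg.1.sub hh.1, hg.2.sub hh.2⟩

theorem const_smul (c : ℝ) (hg : IsTestFunction g) : IsTestFunction (c • g) :=
  ⟨hg.1.const_smul c, hg.2.smul_left (f := fun _ => c)⟩

theorem comp_sub (hg : IsTestFunction g) (y : Ed d) : IsTestFunction fun z => g (z - y) :=
  ⟨hg.1.comp (contDiff_id.sub contDiff_const), hg.2.comp_homeomorph (Homeomorph.subRight y)⟩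

theorem comp_smul (hg : IsTestFunction g) {c : ℝ} (hc : c ≠ 0) :
    IsTestFunction fun z => g (c • z) :=
  ⟨hg.1.comp (contDiff_id.const_smul c), hg.2.comp_homeomorph (Homeomorph.smulOfNeZero c hc)⟩

theorem scaled (hg : IsTestFunction g) (y : Ed d) {l : ℝ} (hl : 0 < l) :
    IsTestFunction (scaled g y l) :=
  ((hg.comp_smul (inv_ne_zero hl.ne')).comp_sub y).const_smul (l ^ d)⁻¹

theorem sum {ι : Type*} (s : Finset ι) {g : ι → Ed d → ℝ} (hg : ∀ i ∈ s, IsTestFunction (g i)) :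
    IsTestFunction (∑ i ∈ s, g i) :=
  Finset.sum_induction g IsTestFunction (fun _ _ => add) zero hg

theorem norm_iteratedFDeriv_le_Cnorm (hg : IsTestFunction g) {i r : ℕ} (hi : i ≤ r) (x : Ed d) :
    ‖iteratedFDeriv ℝ i g x‖ ≤ Cnorm r g := by
  obtain ⟨M, hM⟩ := (hg.contDiff_nat i).continuous_iteratedFDeriv'.bounded_above_of_compact_support
    (hg.2.iteratedFDeriv i)
  refine (le_ciSup ⟨M, Set.forall_mem_range.2 hM⟩ x).trans ?_
  exact le_ciSup (f := fun j : Fin (r + 1) => ⨆ x : Ed d, ‖iteratedFDeriv ℝ (j : ℕ) g x‖)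
    (Set.finite_range _).bddAbove ⟨i, by lia⟩

theorem abs_le_Cnorm (hg : IsTestFunction g) (r : ℕ) (x : Ed d) : |g x| ≤ Cnorm r g := by
  simpa using hg.norm_iteratedFDeriv_le_Cnorm r.zero_le x

theorem Cnorm_nonneg (hg : IsTestFunction g) (r : ℕ) : 0 ≤ Cnorm r g :=
  (abs_nonneg _).trans (hg.abs_le_Cnorm r 0)

end IsTestFunction

theorem Cnorm_le {r : ℕ} {M : ℝ} (hM : ∀ i ≤ r, ∀ x, ‖iteratedFDeriv ℝ i g x‖ ≤ M) :
    Cnorm r g ≤ M :=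
  ciSup_le fun i => ciSup_le fun x => hM i (by lia) x

theorem scaled_eq_comp_sub (k : Ed d → ℝ) (y : Ed d) (l : ℝ) :
    scaled k y l = fun z => scaled k 0 l (z - y) := by
  funext z
  simp only [scaled, sub_zero]

theorem scaled_scaled (k : Ed d → ℝ) (y : Ed d) (l e : ℝ) :
    scaled (scaled k 0 l) y e = scaled k y (l * e) := by
  funext z
  simp only [scaled, sub_zero, smul_smul, mul_inv, mul_pow]
  ring

theorem integral_scaled_mul (k f : Ed d → ℝ) {l : ℝ} (hl : 0 < l) :
    ∫ u, scaled k 0 l u * f u = ∫ u, k u * f (l • u) := by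
  have substitution := Measure.integral_comp_inv_smul_of_nonneg (volume : Measure (Ed d))
    (fun u => k u * f (l • u)) hl.le
  simp only [smul_inv_smul₀ hl.ne', finrank_euclideanSpace, Fintype.card_fin, smul_eq_mul]
    at substitution
  simp only [scaled, sub_zero, mul_assoc]
  rw [integral_const_mul, substitution, inv_mul_cancel_left₀ (by positivity)]

theorem integral_scaled (k : Ed d → ℝ) {l : ℝ} (hl : 0 < l) : ∫ u, scaled k 0 l u = ∫ u, k u := by
  simpa only [mul_one] using integral_scaled_mul k (fun _ => 1) hl

theorem conv_eq_convolution (k h : Ed d → ℝ) :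
    conv k h = h ⋆[ContinuousLinearMap.lsmul ℝ ℝ] k := by
  funext x
  simp only [conv, convolution_def, ContinuousLinearMap.lsmul_apply, smul_eq_mul, mul_comm]

theorem conv_apply (k h : Ed d → ℝ) (x : Ed d) : conv k h x = ∫ u, k u * h (x - u) := by
  rw [conv_eq_convolution, convolution_lsmul_swap]
  simp only [smul_eq_mul, mul_comm]

theorem conv_comm (k h : Ed d → ℝ) : conv k h = conv h k := by
  funext x
  rw [conv_apply, conv]
  simp only [mul_comm]

theorem conv_comp_sub (k h : Ed d → ℝ) (y : Ed d) :
    conv k (fun z => h (z - y)) = fun z => conv k h (z - y) := by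
  funext z
  simp only [conv_apply, sub_right_comm]

theorem conv_const_smul (c : ℝ) (k h : Ed d → ℝ) : conv k (c • h) = c • conv k h := by
  rw [conv_eq_convolution, conv_eq_convolution, smul_convolution]

theorem IsTestFunction.conv (hk : IsTestFunction k) (hh : IsTestFunction h) :
    IsTestFunction (conv k h) := by
  rw [conv_eq_convolution]
  exact ⟨hk.2.contDiff_convolution_right _ hh.continuous.locallyIntegrable hk.1,
    hh.2.convolution _ hk.2⟩

theorem IsTestFunction.convolutionExists (hk : IsTestFunction k) (hh : IsTestFunction h) :
    ConvolutionExists h k (ContinuousLinearMap.lsmul ℝ ℝ) :=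
  hk.2.convolutionExists_right _ hh.continuous.locallyIntegrable hk.continuous

theorem conv_add (hk : IsTestFunction k) (hg : IsTestFunction g) (hh : IsTestFunction h) :
    conv k (g + h) = conv k g + conv k h := by
  simp only [conv_eq_convolution]
  exact (hk.convolutionExists hg).add_distrib (hk.convolutionExists hh)

theorem conv_sub (hk : IsTestFunction k) (hg : IsTestFunction g) (hh : IsTestFunction h) :
    conv k (g - h) = conv k g - conv k h := by
  rw [sub_eq_add_neg, ← neg_one_smul ℝ, conv_add hk hg (hh.const_smul _), conv_const_smul,
    neg_one_smul, ← sub_eq_add_neg]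

theorem conv_conv_apply (k h g : Ed d → ℝ) (x : Ed d) :
    conv k (conv h g) x = ∫ u, ∫ v, k u * h v * g (x - u - v) := by
  simp only [conv_apply, mul_assoc, integral_const_mul]

theorem conv_left_comm (hk : IsTestFunction k) (hh : IsTestFunction h) (hg : IsTestFunction g) :
    conv k (conv h g) = conv h (conv k g) := by
  funext x
  have swap : ∫ u, ∫ v, k u * h v * g (x - u - v) = ∫ v, ∫ u, k u * h v * g (x - u - v) := by
    refine integral_integral_swap_of_hasCompactSupport ?_ ?_
    · have := hk.continuous
      have := hh.continuous
      have := hg.continuous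
      unfold Function.uncurry
      fun_prop
    · refine HasCompactSupport.intro (hk.2.isCompact.prod hh.2.isCompact) fun p hp => ?_
      rcases not_and_or.1 (mt Set.mem_prod.2 hp) with hu | hv
      · simp only [Function.uncurry, image_eq_zero_of_notMem_tsupport hu, zero_mul]
      · simp only [Function.uncurry, image_eq_zero_of_notMem_tsupport hv, mul_zero, zero_mul]
  rw [conv_conv_apply, conv_conv_apply, swap]
  simp only [mul_comm (k _), sub_right_comm x]

theorem iteratedFDeriv_conv (hk : IsTestFunction k) (hh : IsTestFunction h) (n : ℕ) (x : Ed d) :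
    iteratedFDeriv ℝ n (conv k h) x = ∫ y, h y • iteratedFDeriv ℝ n k (x - y) := by
  rw [conv_eq_convolution, iteratedFDeriv_convolution_lsmul hh.continuous.locallyIntegrable hk.2 n
    (hk.contDiff_nat n)]
  rfl

theorem tsupport_conv_subset {x y : Ed d} {a b : ℝ} (hk : tsupport k ⊆ closedBall x a)
    (hh : tsupport h ⊆ closedBall y b) : tsupport (conv k h) ⊆ closedBall (x + y) (a + b) := by
  rw [conv_eq_convolution, add_comm, add_comm a]
  refine closure_minimal ((support_convolution_subset _).trans ?_) isClosed_closedBall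
  exact Set.add_subset_iff.2 fun u hu v hv => (dist_add_add_le u v y x).trans
    (add_le_add (hh (subset_tsupport h hu)) (hk (subset_tsupport k hv)))

end TestFunctions

section Jets

variable {d : ℕ} {g h k : Ed d → ℝ}

/-- The space of `m`-jets of real functions at a point of `ℝ^d`, encoded as the tuple of the
derivatives of order `≤ m`. -/
def JetSpace (d m : ℕ) := ∀ i : Fin (m + 1), Ed d [×i]→L[ℝ] ℝ

instance (d m : ℕ) : NormedAddCommGroup (JetSpace d m) :=
  inferInstanceAs (NormedAddCommGroup (∀ i : Fin (m + 1), Ed d [×i]→L[ℝ] ℝ))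

instance (d m : ℕ) : NormedSpace ℝ (JetSpace d m) :=
  inferInstanceAs (NormedSpace ℝ (∀ i : Fin (m + 1), Ed d [×i]→L[ℝ] ℝ))

instance (d m : ℕ) : CompleteSpace (JetSpace d m) :=
  inferInstanceAs (CompleteSpace (∀ i : Fin (m + 1), Ed d [×i]→L[ℝ] ℝ))

/-- The order-`i` part of a jet. -/
def JetSpace.component {d m : ℕ} (i : Fin (m + 1)) : JetSpace d m →L[ℝ] Ed d [×i]→L[ℝ] ℝ :=
  ContinuousLinearMap.proj (R := ℝ) (φ := fun i : Fin (m + 1) => Ed d [×i]→L[ℝ] ℝ) i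

theorem IsTestFunction.continuous_jet (hg : IsTestFunction g) (m : ℕ) :
    Continuous fun x => (fun i => iteratedFDeriv ℝ i g x : JetSpace d m) :=
  continuous_pi fun i => (hg.contDiff_nat i).continuous_iteratedFDeriv'

theorem IsTestFunction.hasCompactSupport_jet (hg : IsTestFunction g) (m : ℕ) :
    HasCompactSupport fun x => (fun i => iteratedFDeriv ℝ i g x : JetSpace d m) :=
  .intro hg.2 fun _ hx => funext fun i =>
    image_eq_zero_of_notMem_tsupport fun hxi => hx (tsupport_iteratedFDeriv_subset i hxi)

/-- The `m`-jet of a test function, as an element of the Banach space of bounded continuous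
jet-valued functions; its sup norm dominates the `C^m` norm. -/
def jet (m : ℕ) (hg : IsTestFunction g) : Ed d →ᵇ JetSpace d m :=
  .ofNormedAddCommGroup _ (hg.continuous_jet m) _ ((hg.continuous_jet m)
    |>.bounded_above_of_compact_support (hg.hasCompactSupport_jet m)).choose_spec

theorem jet_apply (m : ℕ) (hg : IsTestFunction g) (x : Ed d) (i : Fin (m + 1)) :
    jet m hg x i = iteratedFDeriv ℝ i g x := rfl

theorem Cnorm_le_norm_jet (m : ℕ) (hg : IsTestFunction g) : Cnorm m g ≤ ‖jet m hg‖ :=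
  Cnorm_le fun i hi x =>
    (norm_le_pi_norm (jet m hg x) ⟨i, by lia⟩).trans ((jet m hg).norm_coe_le_norm x)

theorem jet_comp_sub_apply (m : ℕ) (hg : IsTestFunction g) (y x : Ed d) :
    jet m (hg.comp_sub y) x = jet m hg (x - y) :=
  funext fun i => iteratedFDeriv_comp_sub i y x

theorem continuous_jet_comp_sub (m : ℕ) (hg : IsTestFunction g) :
    Continuous fun y => jet m (hg.comp_sub y) := by
  have uniform : UniformContinuous (jet m hg) :=
    (hg.hasCompactSupport_jet m).uniformContinuous_of_continuous (hg.continuous_jet m)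
  refine Metric.continuous_iff.2 fun y ε hε => ?_
  obtain ⟨δ, hδ, hclose⟩ := Metric.uniformContinuous_iff.1 uniform (ε / 2) (half_pos hε)
  refine ⟨δ, hδ, fun a ha => lt_of_le_of_lt ?_ (half_lt_self hε)⟩
  refine (BoundedContinuousFunction.dist_le (half_pos hε).le).2 fun x => ?_
  rw [jet_comp_sub_apply, jet_comp_sub_apply]
  exact (hclose (by rwa [dist_sub_left])).le

/-- The space of test functions supported in `K`. -/
def testFunctionsIn (K : Set (Ed d)) : Submodule ℝ (Ed d → ℝ) where
  carrier := {g | IsTestFunction g ∧ tsupport g ⊆ K}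
  add_mem' {g h} hg hh :=
    ⟨hg.1.add hh.1, (tsupport_add g h).trans (union_subset hg.2 hh.2)⟩
  zero_mem' := ⟨.zero, by simp⟩
  smul_mem' c g hg := ⟨hg.1.const_smul c, (tsupport_smul_subset_right (fun _ => c) g).trans hg.2⟩

/-- `jet` as a linear map on the test functions supported in `K`. -/
def jetLM (m : ℕ) (K : Set (Ed d)) : testFunctionsIn K →ₗ[ℝ] (Ed d →ᵇ JetSpace d m) where
  toFun g := jet m g.2.1
  map_add' g h := by
    ext1 x
    exact funext fun i => iteratedFDeriv_add_apply (g.2.1.contDiff_nat i).contDiffAt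
      (h.2.1.contDiff_nat i).contDiffAt
  map_smul' c g := by
    ext1 x
    exact funext fun i => iteratedFDeriv_const_smul_apply (g.2.1.contDiff_nat i).contDiffAt

theorem jetLM_injective (m : ℕ) (K : Set (Ed d)) : Function.Injective (jetLM m K) := by
  intro g h hgh
  ext x
  exact congrArg (fun J : Ed d →ᵇ JetSpace d m => J x 0 0) hgh

namespace IsDistribution

variable {T : (Ed d → ℝ) →ₗ[ℝ] ℝ}

theorem exists_extension_jet (hT : IsDistribution T) {K : Set (Ed d)} (hK : IsCompact K) :
    ∃ (m : ℕ) (L : (Ed d →ᵇ JetSpace d m) →L[ℝ] ℝ),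
      ∀ {g : Ed d → ℝ} (hg : IsTestFunction g), tsupport g ⊆ K → L (jet m hg) = T g := by
  obtain ⟨m, C, hC⟩ := hT K hK
  let toJet := LinearEquiv.ofInjective (jetLM m K) (jetLM_injective m K)
  let onJets : (LinearMap.range (jetLM m K)) →ₗ[ℝ] ℝ :=
    T ∘ₗ (testFunctionsIn K).subtype ∘ₗ toJet.symm.toLinearMap
  have onJets_toJet (g : testFunctionsIn K) : onJets (toJet g) = T g := by simp [onJets]
  have bounded (J) : ‖onJets J‖ ≤ |C| * ‖J‖ := by
    obtain ⟨g, rfl⟩ := toJet.surjective J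
    calc ‖onJets (toJet g)‖ = |T g| := by rw [onJets_toJet, Real.norm_eq_abs]
      _ ≤ C * Cnorm m g.1 := hC g g.2.1 g.2.2
      _ ≤ |C| * Cnorm m g.1 := by gcongr; exacts [g.2.1.Cnorm_nonneg m, le_abs_self C]
      _ ≤ |C| * ‖toJet g‖ := by gcongr; exact Cnorm_le_norm_jet m g.2.1
  obtain ⟨L, hL, -⟩ := exists_extension_norm_eq (LinearMap.range (jetLM m K))
    (onJets.mkContinuous |C| bounded)
  exact ⟨m, L, fun hg hgK => (hL (toJet ⟨_, hg, hgK⟩)).trans (onJets_toJet _)⟩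

theorem continuous_comp_sub (hT : IsDistribution T) (hg : IsTestFunction g) :
    Continuous fun y => T fun z => g (z - y) := by
  obtain ⟨R, hR⟩ := hg.2.isBounded.subset_closedBall 0
  refine continuous_iff_continuousAt.2 fun y₀ => ?_
  obtain ⟨m, L, hL⟩ := hT.exists_extension_jet (isCompact_closedBall y₀ (R + 1))
  refine (L.continuous.comp (continuous_jet_comp_sub m hg)).continuousAt.congr ?_
  filter_upwards [closedBall_mem_nhds y₀ one_pos] with y hy
  refine hL _ (closure_minimal (fun z hz => ?_) isClosed_closedBall)
  calc dist z y₀ ≤ dist z y + dist y y₀ := dist_triangle _ _ _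
    _ ≤ R + 1 := add_le_add (by simpa [dist_eq_norm] using hR (subset_tsupport g hz)) hy

open scoped Pointwise in
theorem map_conv (hT : IsDistribution T) (hk : IsTestFunction k) (hh : IsTestFunction h) :
    T (conv k h) = ∫ y, T (fun z => k (z - y)) * h y := by
  obtain ⟨m, L, hL⟩ := hT.exists_extension_jet (hh.2.isCompact.add hk.2.isCompact)
  have integrable : Integrable fun y => h y • jet m (hk.comp_sub y) :=
    (hh.continuous.smul (continuous_jet_comp_sub m hk)).integrable_of_hasCompactSupport
      hh.2.smul_right
  have jet_conv : jet m (hk.conv hh) = ∫ y, h y • jet m (hk.comp_sub y) := by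
    ext1 x
    funext i
    let eval : (Ed d →ᵇ JetSpace d m) →L[ℝ] (Ed d [×i]→L[ℝ] ℝ) :=
      (JetSpace.component i).comp (BoundedContinuousFunction.evalCLM ℝ x)
    refine .trans ?_ (eval.integral_comp_comm integrable)
    rw [jet_apply, iteratedFDeriv_conv hk hh]
    exact integral_congr_ae (.of_forall fun y => congrArg (h y • ·)
      (iteratedFDeriv_comp_sub i y x).symm)
  have support_conv : tsupport (conv k h) ⊆ tsupport h + tsupport k := by
    rw [conv_eq_convolution]
    exact closure_minimal ((support_convolution_subset _).trans
      (Set.add_subset_add (subset_tsupport h) (subset_tsupport k)))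
      (hh.2.isCompact.add hk.2.isCompact).isClosed
  rw [← hL (hk.conv hh) support_conv, jet_conv, ← L.integral_comp_comm integrable]
  refine integral_congr_ae (.of_forall fun y => ?_)
  simp only [map_smul, smul_eq_mul, mul_comm (h y)]
  rcases eq_or_ne (h y) 0 with hy | hy
  · rw [hy, mul_zero, mul_zero]
  · rw [hL]
    refine closure_minimal (fun z hz => ?_) (hh.2.isCompact.add hk.2.isCompact).isClosed
    exact ⟨y, subset_tsupport h hy, z - y, subset_tsupport k hz, add_sub_cancel y z⟩

end IsDistribution

end Jets

section Mollification

variable {d : ℕ} {g k : Ed d → ℝ} {T : (Ed d → ℝ) →ₗ[ℝ] ℝ}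

namespace IsDistribution

theorem continuous_scaled (hT : IsDistribution T) (hk : IsTestFunction k) {e : ℝ} (he : 0 < e) :
    Continuous fun y => T (scaled k y e) :=
  (hT.continuous_comp_sub (hk.scaled 0 he)).congr fun y =>
    congrArg T (scaled_eq_comp_sub k y e).symm

theorem map_conv_scaled (hT : IsDistribution T) (hk : IsTestFunction k) (hg : IsTestFunction g)
    {e : ℝ} (he : 0 < e) :
    T (conv (scaled k 0 e) g) = ∫ u, k u * T fun z => g (z - e • u) := by
  rw [conv_comm, hT.map_conv hg (hk.scaled 0 he),
    ← integral_scaled_mul k (fun u => T fun z => g (z - u)) he]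
  simp only [mul_comm]

theorem map_conv_scaled_conv_scaled (hT : IsDistribution T) (hk : IsTestFunction k)
    (hg : IsTestFunction g) {a b : ℝ} (ha : 0 < a) (hb : 0 < b) :
    T (conv (scaled k 0 a) (conv (scaled k 0 b) g)) =
      ∫ u, k u * ∫ v, k v * T fun z => g (z - (a • u + b • v)) := by
  rw [hT.map_conv_scaled hk ((hk.scaled 0 hb).conv hg) ha]
  congr! 3 with u
  rw [← conv_comp_sub, hT.map_conv_scaled hk (hg.comp_sub _) hb]
  simp only [sub_sub, add_comm (a • u)]

end IsDistribution

theorem IsTestFunction.continuous_integral_mul {X : Type*} [TopologicalSpace X]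
    (hk : IsTestFunction k) {b : X × Ed d → ℝ} (hb : Continuous b) :
    Continuous fun p => ∫ u, k u * b (p, u) := by
  rw [← continuousOn_univ]
  refine continuousOn_integral_of_compact_support hk.2.isCompact
    ((hk.continuous.comp continuous_snd).mul hb).continuousOn fun p u _ hu => ?_
  rw [image_eq_zero_of_notMem_tsupport hu, zero_mul]

theorem IsTestFunction.tendsto_integral_integral_mul (hk : IsTestFunction k)
    (hk_int : ∫ u, k u = 1) {G : Ed d → ℝ} (hG : Continuous G) {ι : Type*} {L : Filter ι}
    {a b : ι → ℝ} (ha : Tendsto a L (𝓝 0)) (hb : Tendsto b L (𝓝 0)) :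
    Tendsto (fun i => ∫ u, k u * ∫ v, k v * G (a i • u + b i • v)) L (𝓝 (G 0)) := by
  have continuous_inner : Continuous fun q : (ℝ × ℝ) × Ed d =>
      ∫ v, k v * G (q.1.1 • q.2 + q.1.2 • v) := by
    have hG' : Continuous fun q : ((ℝ × ℝ) × Ed d) × Ed d =>
      G (q.1.1.1 • q.1.2 + q.1.1.2 • q.2) := hG.comp (by fun_prop)
    exact hk.continuous_integral_mul hG'
  have continuous_average := hk.continuous_integral_mul continuous_inner
  have average_zero : ∫ u, k u * ∫ v, k v * G ((0 : ℝ) • u + (0 : ℝ) • v) = G 0 := by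
    simp [integral_mul_const, hk_int]
  have limit := (continuous_average.tendsto (0, 0)).comp (ha.prodMk_nhds hb)
  simp only [Function.comp_def] at limit
  rw [average_zero] at limit
  exact limit

theorem IsDistribution.tendsto_map_conv_scaled_conv_scaled (hT : IsDistribution T)
    (hk : IsTestFunction k) (hg : IsTestFunction g) (hk_int : ∫ u, k u = 1) {ι : Type*}
    {L : Filter ι} {a b : ι → ℝ} (ha : ∀ i, 0 < a i) (hb : ∀ i, 0 < b i)
    (ha0 : Tendsto a L (𝓝 0)) (hb0 : Tendsto b L (𝓝 0)) :
    Tendsto (fun i => T (conv (scaled k 0 (a i)) (conv (scaled k 0 (b i)) g))) L (𝓝 (T g)) := by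
  simp only [hT.map_conv_scaled_conv_scaled hk hg (ha _) (hb _)]
  simpa only [sub_zero] using
    hk.tendsto_integral_integral_mul hk_int (hT.continuous_comp_sub hg) ha0 hb0

end Mollification

section Taylor

theorem exists_sum_mul_pow_eq_ite (v : ℕ → ℝ) (hv : Function.Injective v) (n : ℕ) :
    ∃ c : ℕ → ℝ, ∀ j < n, ∑ i ∈ Finset.range n, c i * v i ^ j = if j = 0 then 1 else 0 := by
  -- `c i` is the value at `0` of the Lagrange basis, so the sum interpolates `X ^ j` at `0`.
  refine ⟨fun i => (Lagrange.basis (Finset.range n) v i).eval 0, fun j hj => ?_⟩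
  have interpolate := congrArg (Polynomial.eval 0)
    (Lagrange.eq_interpolate (f := (Polynomial.X ^ j : Polynomial ℝ)) hv.injOn
      (s := Finset.range n) (by simpa using hj))
  simp only [Lagrange.interpolate_apply, Polynomial.eval_finsetSum, Polynomial.eval_pow,
    Polynomial.eval_X, Polynomial.eval_mul, Polynomial.eval_C, zero_pow_eq] at interpolate
  simp only [interpolate, mul_comm]

theorem abs_sub_taylorWithinEval_le {G : ℝ → ℝ} {n : ℕ} (hG : ContDiff ℝ (n + 1) G) {M s t : ℝ}
    (hM : ∀ t, ‖iteratedDeriv (n + 1) G t‖ ≤ M) (hs : 0 < s) (ht : t ∈ Icc 0 s) :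
    |G t - taylorWithinEval G n (Icc 0 s) 0 t| ≤ M * s ^ (n + 1) := by
  have remainder := taylor_mean_remainder_bound hs.le hG.contDiffOn ht (C := M) fun y hy => by
    rw [iteratedDerivWithin_eq_iteratedDeriv (uniqueDiffOn_Icc hs) hG.contDiffAt hy]
    exact hM y
  have hM0 : 0 ≤ M := (norm_nonneg _).trans (hM 0)
  calc _ ≤ M * (t - 0) ^ (n + 1) / n.factorial := remainder
    _ ≤ M * (t - 0) ^ (n + 1) :=
      div_le_self (mul_nonneg hM0 (pow_nonneg (sub_nonneg.2 ht.1) _))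
        (Nat.one_le_cast.2 n.factorial_pos)
    _ ≤ M * s ^ (n + 1) := by
      gcongr
      · linarith [ht.1]
      · linarith [ht.2]

theorem sum_mul_taylorWithinEval_eq {n : ℕ} {c v : ℕ → ℝ}
    (hc : ∀ j < n + 1, ∑ i ∈ Finset.range (n + 1), c i * v i ^ j = if j = 0 then 1 else 0)
    (G : ℝ → ℝ) (S : Set ℝ) (s : ℝ) :
    ∑ i ∈ Finset.range (n + 1), c i * taylorWithinEval G n S 0 (s * v i) = G 0 := by
  have moment (j : ℕ) (hj : j ∈ Finset.range (n + 1)) :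
      ∑ i ∈ Finset.range (n + 1),
        c i * ((j.factorial : ℝ)⁻¹ * (s * v i) ^ j * iteratedDerivWithin j G S 0) =
      if j = 0 then G 0 else 0 := by
    calc
      _ = ((j.factorial : ℝ)⁻¹ * s ^ j * iteratedDerivWithin j G S 0) *
          (∑ i ∈ Finset.range (n + 1), c i * v i ^ j) := by
        rw [Finset.mul_sum]
        exact Finset.sum_congr rfl fun i _ => by rw [mul_pow]; ring
      _ = _ := by
        rw [hc j (Finset.mem_range.1 hj)]
        split_ifs with hj0 <;> simp [hj0]
  simp only [taylor_within_apply, sub_zero, smul_eq_mul, Finset.mul_sum]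
  rw [Finset.sum_comm, Finset.sum_congr rfl moment]
  simp

theorem abs_sum_mul_sub_le {n : ℕ} {c v : ℕ → ℝ} (hv : ∀ i, v i ∈ Icc (0 : ℝ) 1)
    (hc : ∀ j < n + 1, ∑ i ∈ Finset.range (n + 1), c i * v i ^ j = if j = 0 then 1 else 0)
    {G : ℝ → ℝ} (hG : ContDiff ℝ (n + 1) G) {M s : ℝ}
    (hM : ∀ t, ‖iteratedDeriv (n + 1) G t‖ ≤ M) (hs : 0 < s) :
    |∑ i ∈ Finset.range (n + 1), c i * G (s * v i) - G 0| ≤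
      (∑ i ∈ Finset.range (n + 1), |c i|) * (M * s ^ (n + 1)) := by
  rw [← sum_mul_taylorWithinEval_eq hc G (Icc 0 s) s, ← Finset.sum_sub_distrib, Finset.sum_mul]
  refine (Finset.abs_sum_le_sum_abs _ _).trans (Finset.sum_le_sum fun i _ => ?_)
  have in_range : s * v i ∈ Icc 0 s :=
    ⟨mul_nonneg hs.le (hv i).1, mul_le_of_le_one_right hs.le (hv i).2⟩
  rw [← mul_sub, abs_mul]
  gcongr
  exact abs_sub_taylorWithinEval_le hG hM hs in_range

theorem norm_iteratedDeriv_comp_sub_smul_le {E W : Type*} [NormedAddCommGroup E] [NormedSpace ℝ E]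
    [NormedAddCommGroup W] [NormedSpace ℝ W] {g : E → W} {n : ℕ} (hg : ContDiff ℝ n g) {M : ℝ}
    (hM : ∀ x, ‖iteratedFDeriv ℝ n g x‖ ≤ M) (y u : E) (t : ℝ) :
    ‖iteratedDeriv n (fun t : ℝ => g (y - t • u)) t‖ ≤ M * ‖u‖ ^ n := by
  let L : ℝ →L[ℝ] E := ContinuousLinearMap.toSpanSingleton ℝ (-u)
  have comp_eq : (fun t : ℝ => g (y - t • u)) = (fun z => g (z + y)) ∘ L := by
    funext t
    simp [L, sub_eq_add_neg, add_comm]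
  have smooth : ContDiff ℝ n fun z => g (z + y) := hg.comp (contDiff_id.add contDiff_const)
  rw [← norm_iteratedFDeriv_eq_norm_iteratedDeriv, comp_eq,
    L.iteratedFDeriv_comp_right smooth t le_rfl, iteratedFDeriv_comp_add_right]
  refine (ContinuousMultilinearMap.norm_compContinuousLinearMap_le _ _).trans ?_
  simp only [L, ContinuousLinearMap.norm_toSpanSingleton, norm_neg, Finset.prod_const,
    Finset.card_univ, Fintype.card_fin]
  gcongr
  exact hM _

end Taylor

section Kernel

variable {d : ℕ} {g φ : Ed d → ℝ} {c v : ℕ → ℝ}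

theorem conv_scaled_apply (k g : Ed d → ℝ) {e : ℝ} (he : 0 < e) (y : Ed d) :
    conv (scaled k 0 e) g y = ∫ u, k u * g (y - e • u) := by
  rw [conv_apply, integral_scaled_mul k (fun u => g (y - u)) he]

/-- A smoothing kernel of order `r`: a test function with integral one whose rescalings approximate
the identity up to an error of order `e ^ r`, like a kernel with vanishing moments of orders
`1, …, r - 1`. -/
structure IsKernelOfOrder (r : ℕ) (k : Ed d → ℝ) : Prop where
  isTestFunction : IsTestFunction k
  integral_eq_one : ∫ u, k u = 1
  exists_abs_conv_sub_le : ∃ C : ℝ, 0 ≤ C ∧ ∀ e : ℝ, 0 < e → ∀ g : Ed d → ℝ, IsTestFunction g →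
    ∀ M : ℝ, (∀ x, ‖iteratedFDeriv ℝ r g x‖ ≤ M) →
      ∀ y, |conv (scaled k 0 e) g y - g y| ≤ C * e ^ r * M

/-- The tweaking of a test function `φ`: the combination with weights `c i` of its rescalings by
`v i`, normalized by `∫ φ`. A suitable choice of `c` cancels the moments of orders `1, …, n`. -/
def tweak (φ : Ed d → ℝ) (c v : ℕ → ℝ) (n : ℕ) : Ed d → ℝ :=
  ∑ i ∈ Finset.range (n + 1), (c i / ∫ x, φ x) • scaled φ 0 (v i)

theorem IsTestFunction.tweak (hφ : IsTestFunction φ) (c : ℕ → ℝ) (hv : ∀ i, 0 < v i) (n : ℕ) :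
    IsTestFunction (tweak φ c v n) :=
  .sum _ fun i _ => (hφ.scaled 0 (hv i)).const_smul _

theorem scaled_tweak (φ : Ed d → ℝ) (c v : ℕ → ℝ) (n : ℕ) (y : Ed d) (e : ℝ) :
    scaled (tweak φ c v n) y e =
      ∑ i ∈ Finset.range (n + 1), (c i / ∫ x, φ x) • scaled φ y (v i * e) := by
  simp only [← scaled_scaled]
  funext z
  simp only [scaled, tweak, Finset.sum_apply, Pi.smul_apply, smul_eq_mul, Finset.mul_sum]
  exact Finset.sum_congr rfl fun i _ => by ring

theorem integral_tweak_mul (hφ : IsTestFunction φ) (c : ℕ → ℝ) (hv : ∀ i, 0 < v i) (n : ℕ)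
    {f : Ed d → ℝ} (hf : Continuous f) :
    ∫ u, tweak φ c v n u * f u =
      (∫ x, φ x)⁻¹ * ∫ u, φ u * ∑ i ∈ Finset.range (n + 1), c i * f (v i • u) := by
  have integrable_mul {h : Ed d → ℝ} (hh : IsTestFunction h) {b : Ed d → ℝ} (hb : Continuous b) :
      Integrable fun u => h u * b u :=
    (hh.continuous.mul hb).integrable_of_hasCompactSupport hh.2.mul_right
  have integrable_left (i : ℕ) :
      Integrable fun u => c i / (∫ x, φ x) * (scaled φ 0 (v i) u * f u) :=
    (integrable_mul (hφ.scaled 0 (hv i)) hf).const_mul _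
  have integrable_right (i : ℕ) : Integrable fun u => c i * (φ u * f (v i • u)) :=
    (integrable_mul hφ (by fun_prop : Continuous fun u => f (v i • u))).const_mul _
  simp only [tweak, Finset.sum_apply, Pi.smul_apply, smul_eq_mul, Finset.sum_mul, Finset.mul_sum,
    mul_assoc, mul_left_comm (φ _)]
  rw [integral_finsetSum _ fun i _ => integrable_left i,
    integral_finsetSum _ fun i _ => integrable_right i, Finset.mul_sum]
  refine Finset.sum_congr rfl fun i _ => ?_
  rw [integral_const_mul, integral_const_mul, integral_scaled_mul φ f (hv i)]
  ring

theorem integral_tweak (hφ : IsTestFunction φ) (hφ_int : ∫ x, φ x ≠ 0) (hv : ∀ i, 0 < v i) {n : ℕ}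
    (hc : ∑ i ∈ Finset.range (n + 1), c i = 1) : ∫ u, tweak φ c v n u = 1 := by
  simpa [hc, hφ_int] using integral_tweak_mul hφ c hv n (continuous_const (y := (1 : ℝ)))

theorem conv_scaled_tweak_sub_eq (hφ : IsTestFunction φ) (hφ_int : ∫ x, φ x ≠ 0)
    (c : ℕ → ℝ) (hv : ∀ i, 0 < v i) (n : ℕ) (hg : Continuous g) {e : ℝ} (he : 0 < e) (y : Ed d) :
    conv (scaled (tweak φ c v n) 0 e) g y - g y = (∫ x, φ x)⁻¹ *
      ∫ u, φ u * (∑ i ∈ Finset.range (n + 1), c i * g (y - (e * v i) • u) - g y) := by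
  have integrable_mul {b : Ed d → ℝ} (hb : Continuous b) : Integrable fun u => φ u * b u :=
    (hφ.continuous.mul hb).integrable_of_hasCompactSupport hφ.2.mul_right
  have integral_const : (∫ x, φ x)⁻¹ * ∫ u, φ u * g y = g y := by
    rw [integral_mul_const, inv_mul_cancel_left₀ hφ_int]
  rw [conv_scaled_apply _ _ he, integral_tweak_mul hφ c hv n (by fun_prop)]
  simp only [smul_smul, mul_sub (φ _)]
  rw [integral_sub (integrable_mul (by fun_prop)) (integrable_mul continuous_const), mul_sub,
    integral_const]

theorem abs_conv_scaled_tweak_sub_le (hφ : IsTestFunction φ) (hφ_int : ∫ x, φ x ≠ 0)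
    (hv : ∀ i, v i ∈ Ioc (0 : ℝ) 1) {n : ℕ}
    (hc : ∀ j < n + 1, ∑ i ∈ Finset.range (n + 1), c i * v i ^ j = if j = 0 then 1 else 0)
    (hg : IsTestFunction g) {e M : ℝ} (he : 0 < e)
    (hM : ∀ x, ‖iteratedFDeriv ℝ (n + 1) g x‖ ≤ M) (y : Ed d) :
    |conv (scaled (tweak φ c v n) 0 e) g y - g y| ≤
      |∫ x, φ x|⁻¹ * ((∑ i ∈ Finset.range (n + 1), |c i|) * ∫ u, |φ u| * ‖u‖ ^ (n + 1)) *
        e ^ (n + 1) * M := by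
  set A := ∑ i ∈ Finset.range (n + 1), |c i|
  have taylor (u : Ed d) :
      |∑ i ∈ Finset.range (n + 1), c i * g (y - (e * v i) • u) - g y| ≤
        A * (M * ‖u‖ ^ (n + 1) * e ^ (n + 1)) := by
    have smooth : ContDiff ℝ (n + 1) fun t : ℝ => g (y - t • u) :=
      (hg.contDiff_nat (n + 1)).comp (contDiff_const.sub (contDiff_id.smul contDiff_const))
    simpa only [zero_smul, sub_zero] using
      abs_sum_mul_sub_le (fun i => Ioc_subset_Icc_self (hv i)) hc smooth
        (norm_iteratedDeriv_comp_sub_smul_le (hg.contDiff_nat (n + 1)) hM y u) he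
  have integrable : Integrable fun u => A * e ^ (n + 1) * M * (|φ u| * ‖u‖ ^ (n + 1)) :=
    (((hφ.continuous.abs.mul (continuous_norm.pow _)).integrable_of_hasCompactSupport
      hφ.2.norm.mul_right)).const_mul _
  have integral_le : ‖∫ u, φ u * (∑ i ∈ Finset.range (n + 1), c i * g (y - (e * v i) • u) - g y)‖ ≤
      ∫ u, A * e ^ (n + 1) * M * (|φ u| * ‖u‖ ^ (n + 1)) := by
    refine norm_integral_le_of_norm_le integrable (.of_forall fun u => ?_)
    rw [norm_mul, Real.norm_eq_abs, Real.norm_eq_abs]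
    calc _ ≤ |φ u| * (A * (M * ‖u‖ ^ (n + 1) * e ^ (n + 1))) := by gcongr; exact taylor u
      _ = _ := by ring
  rw [conv_scaled_tweak_sub_eq hφ hφ_int c (fun i => (hv i).1) n hg.continuous he, abs_mul, abs_inv,
    mul_assoc, mul_assoc]
  rw [integral_const_mul] at integral_le
  gcongr
  exact integral_le.trans_eq (by ring)

theorem isKernelOfOrder_tweak (hφ : IsTestFunction φ) (hφ_int : ∫ x, φ x ≠ 0)
    (hv : ∀ i, v i ∈ Ioc (0 : ℝ) 1) {n : ℕ}
    (hc : ∀ j < n + 1, ∑ i ∈ Finset.range (n + 1), c i * v i ^ j = if j = 0 then 1 else 0) :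
    IsKernelOfOrder (n + 1) (tweak φ c v n) where
  isTestFunction := hφ.tweak c (fun i => (hv i).1) n
  integral_eq_one := integral_tweak hφ hφ_int (fun i => (hv i).1)
    (by simpa only [pow_zero, mul_one, if_true] using hc 0 n.succ_pos)
  exists_abs_conv_sub_le := ⟨_, by positivity, fun _ he _ hg _ hM =>
    abs_conv_scaled_tweak_sub_le hφ hφ_int hv hc hg he hM⟩

namespace AlphaGammaCoherent

variable {α γ : ℝ} {F : Ed d → ((Ed d → ℝ) →ₗ[ℝ] ℝ)}

theorem exists_nonneg (hF : AlphaGammaCoherent α γ F φ) {K : Set (Ed d)} (hK : IsCompact K) :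
    ∃ C : ℝ, 0 ≤ C ∧ ∀ y ∈ K, ∀ z ∈ K, ∀ ε ∈ Ioc (0 : ℝ) 1,
      |F z (scaled φ y ε) - F y (scaled φ y ε)| ≤ C * ε ^ α * (‖z - y‖ + ε) ^ (γ - α) := by
  obtain ⟨C, hC⟩ := hF K hK
  refine ⟨|C|, abs_nonneg C, fun y hy z hz ε hε => (hC y hy z hz ε hε).trans ?_⟩
  have := hε.1
  gcongr
  exact le_abs_self C

theorem tweak (hF : AlphaGammaCoherent α γ F φ) (hαγ : α ≤ γ) (c : ℕ → ℝ)
    (hv : ∀ i, v i ∈ Ioc (0 : ℝ) 1) (n : ℕ) : AlphaGammaCoherent α γ F (tweak φ c v n) := by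
  intro K hK
  obtain ⟨C, hC0, hC⟩ := hF.exists_nonneg hK
  refine ⟨∑ i ∈ Finset.range (n + 1), |c i / ∫ x, φ x| * (C * v i ^ α), fun y hy z hz ε hε => ?_⟩
  rw [scaled_tweak, map_sum, map_sum, ← Finset.sum_sub_distrib, mul_assoc, Finset.sum_mul]
  refine (Finset.abs_sum_le_sum_abs _ _).trans (Finset.sum_le_sum fun i _ => ?_)
  have hε0 := hε.1
  have hv0 := (hv i).1
  have scale_le : v i * ε ≤ ε := mul_le_of_le_one_left hε0.le (hv i).2
  rw [map_smul, map_smul, ← smul_sub, smul_eq_mul, abs_mul, mul_assoc]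
  gcongr
  calc _ ≤ C * (v i * ε) ^ α * (‖z - y‖ + v i * ε) ^ (γ - α) :=
      hC y hy z hz _ ⟨by positivity, scale_le.trans hε.2⟩
    _ ≤ C * (v i * ε) ^ α * (‖z - y‖ + ε) ^ (γ - α) := by gcongr
    _ = _ := by rw [Real.mul_rpow hv0.le hε0.le]; ring

end AlphaGammaCoherent

theorem IsTestFunction.exists_isKernelOfOrder (hφ : IsTestFunction φ) (hφ_int : ∫ x, φ x ≠ 0)
    (n : ℕ) : ∃ k : Ed d → ℝ, IsKernelOfOrder (n + 1) k ∧
      ∀ {α γ : ℝ} {F : Ed d → ((Ed d → ℝ) →ₗ[ℝ] ℝ)}, α ≤ γ →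
        AlphaGammaCoherent α γ F φ → AlphaGammaCoherent α γ F k := by
  let v (i : ℕ) : ℝ := (i + 1 : ℝ)⁻¹
  have hv (i : ℕ) : v i ∈ Ioc (0 : ℝ) 1 := ⟨by positivity, inv_le_one_of_one_le₀ (by simp)⟩
  have v_injective : Function.Injective v := fun i j hij => by simpa [v] using hij
  obtain ⟨c, hc⟩ := exists_sum_mul_pow_eq_ite v v_injective (n + 1)
  exact ⟨_, isKernelOfOrder_tweak hφ hφ_int hv hc, fun hαγ hF => hF.tweak hαγ c hv n⟩

end Kernel

section DyadicSums

variable {d : ℕ} {g h k : Ed d → ℝ} {α γ e : ℝ} {F : Ed d → ((Ed d → ℝ) →ₗ[ℝ] ℝ)}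

/-- The dyadic scale `2⁻ⁿ`. -/
def dyadic (n : ℕ) : ℝ := (1 / 2) ^ n

theorem dyadic_zero : dyadic 0 = 1 := pow_zero _

theorem dyadic_eq_two_mul_succ (n : ℕ) : dyadic n = 2 * dyadic (n + 1) := by
  rw [dyadic, dyadic, pow_succ]
  ring

theorem dyadic_pos (n : ℕ) : 0 < dyadic n := pow_pos one_half_pos n

theorem dyadic_antitone : Antitone dyadic :=
  fun _ _ hmn => pow_le_pow_of_le_one (by norm_num) (by norm_num) hmn

theorem dyadic_le_one (n : ℕ) : dyadic n ≤ 1 := pow_le_one₀ (by norm_num) (by norm_num)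

theorem dyadic_mem_Ioc (n : ℕ) : dyadic n ∈ Ioc (0 : ℝ) 1 := ⟨dyadic_pos n, dyadic_le_one n⟩

theorem tendsto_dyadic : Tendsto dyadic atTop (𝓝 0) :=
  tendsto_pow_atTop_nhds_zero_of_lt_one (by norm_num) (by norm_num)

/-- The `n`-th dyadic piece `hₙ` of a test function `g`. With `kₙ` the rescaling of `k` by `2⁻ⁿ`,
the pieces are chosen so that `∑ n ≤ N, kₙ * hₙ = k_N * k_{N+1} * g`, which tends to `g`. -/
def dyadicPiece (k g : Ed d → ℝ) : ℕ → Ed d → ℝ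
  | 0 => conv (scaled k 0 (dyadic 1)) g
  | n + 1 => conv (scaled k 0 (dyadic (n + 2))) g - conv (scaled k 0 (dyadic n)) g

theorem IsTestFunction.dyadicPiece (hk : IsTestFunction k) (hg : IsTestFunction g) (n : ℕ) :
    IsTestFunction (dyadicPiece k g n) := by
  have smooth (m : ℕ) := (hk.scaled 0 (dyadic_pos m)).conv hg
  cases n with
  | zero => exact smooth 1
  | succ n => exact (smooth (n + 2)).sub (smooth n)

theorem dyadicPiece_add (hk : IsTestFunction k) (hg : IsTestFunction g) (hh : IsTestFunction h)
    (n : ℕ) : dyadicPiece k (g + h) n = dyadicPiece k g n + dyadicPiece k h n := by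
  have conv_add_dyadic (m : ℕ) := conv_add (hk.scaled 0 (dyadic_pos m)) hg hh
  cases n with
  | zero => exact conv_add_dyadic 1
  | succ n => simp only [dyadicPiece, conv_add_dyadic, add_sub_add_comm]

theorem dyadicPiece_const_smul (c : ℝ) (k g : Ed d → ℝ) (n : ℕ) :
    dyadicPiece k (c • g) n = c • dyadicPiece k g n := by
  cases n with
  | zero => exact conv_const_smul c _ g
  | succ n => simp only [dyadicPiece, conv_const_smul, smul_sub]

theorem sum_conv_dyadicPiece (hk : IsTestFunction k) (hg : IsTestFunction g) (N : ℕ) :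
    ∑ n ∈ Finset.range (N + 1), conv (scaled k 0 (dyadic n)) (dyadicPiece k g n) =
      conv (scaled k 0 (dyadic N)) (conv (scaled k 0 (dyadic (N + 1))) g) := by
  have hkn (n : ℕ) : IsTestFunction (scaled k 0 (dyadic n)) := hk.scaled 0 (dyadic_pos n)
  induction N with
  | zero => simp only [zero_add, Finset.sum_range_one, dyadicPiece]
  | succ N ih =>
    rw [Finset.sum_range_succ, ih, dyadicPiece,
      conv_sub (hkn _) ((hkn _).conv hg) ((hkn _).conv hg), conv_left_comm (hkn (N + 1)) (hkn N) hg]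
    abel

theorem IsGerm.measurable_scaled (hF : IsGerm F) (hk : IsTestFunction k) (he : 0 < e) :
    Measurable fun y => F y (scaled k y e) := by
  have jointly_measurable :
      Measurable fun p : Ed d × Ed d => F p.2 fun z => scaled k 0 e (z - p.1) :=
    measurable_uncurry_of_continuous_of_measurable
      (u := fun y x => F x fun z => scaled k 0 e (z - y))
      (fun x => (hF.1 x).continuous_comp_sub (hk.scaled 0 he))
      (fun y => hF.2 _ ((hk.scaled 0 he).comp_sub y))
  have diagonal : (fun y => F y (scaled k y e)) =
      (fun p : Ed d × Ed d => F p.2 fun z => scaled k 0 e (z - p.1)) ∘ fun y => (y, y) :=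
    funext fun y => congrArg (F y) (scaled_eq_comp_sub k y e)
  rw [diagonal]
  exact jointly_measurable.comp (measurable_id.prodMk measurable_id)

theorem IsDistribution.integrable_scaled_mul {T : (Ed d → ℝ) →ₗ[ℝ] ℝ} (hT : IsDistribution T)
    (hk : IsTestFunction k) (he : 0 < e) (hh : IsTestFunction h) :
    Integrable fun y => T (scaled k y e) * h y :=
  ((hT.continuous_scaled hk he).mul hh.continuous).integrable_of_hasCompactSupport hh.2.mul_left

namespace AlphaGammaCoherent

theorem integrable_sub_mul (hcoh : AlphaGammaCoherent α γ F k) (hF : IsGerm F)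
    (hk : IsTestFunction k) (he : e ∈ Ioc (0 : ℝ) 1) (x : Ed d) (hh : IsTestFunction h) :
    Integrable fun y => (F y (scaled k y e) - F x (scaled k y e)) * h y := by
  obtain ⟨C, hC⟩ := hcoh (insert x (tsupport h)) (hh.2.isCompact.insert x)
  have he0 := he.1
  have continuous_bound : Continuous fun y => C * e ^ α * (‖x - y‖ + e) ^ (γ - α) := by
    refine continuous_const.mul (Continuous.rpow_const (by fun_prop) fun y => .inl ?_)
    positivity
  have integrable_bound : Integrable fun y => C * e ^ α * (‖x - y‖ + e) ^ (γ - α) * |h y| :=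
    (continuous_bound.mul hh.continuous.abs).integrable_of_hasCompactSupport hh.2.norm.mul_left
  have measurable : Measurable fun y => (F y (scaled k y e) - F x (scaled k y e)) * h y :=
    ((hF.measurable_scaled hk he0).sub ((hF.1 x).continuous_scaled hk he0).measurable).mul
      hh.continuous.measurable
  refine integrable_bound.mono' measurable.aestronglyMeasurable (.of_forall fun y => ?_)
  rw [norm_mul, Real.norm_eq_abs, Real.norm_eq_abs, abs_sub_comm]
  by_cases hy : y ∈ tsupport h
  · gcongr
    exact hC y (mem_insert_of_mem x hy) x (mem_insert x _) e he
  · simp only [image_eq_zero_of_notMem_tsupport hy, abs_zero, mul_zero, le_refl]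

theorem integrable_mul (hcoh : AlphaGammaCoherent α γ F k) (hF : IsGerm F)
    (hk : IsTestFunction k) (he : e ∈ Ioc (0 : ℝ) 1) (hh : IsTestFunction h) :
    Integrable fun y => F y (scaled k y e) * h y := by
  refine ((hcoh.integrable_sub_mul hF hk he 0 hh).add
    ((hF.1 0).integrable_scaled_mul hk he.1 hh)).congr (.of_forall fun y => ?_)
  simp only [Pi.add_apply, ← add_mul, sub_add_cancel]

end AlphaGammaCoherent

/-- The approximations `∑ n < N, ∫ F_y(kₙ(· - y)) hₙ(y) dy` to the reconstruction of the germ `F`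
tested against `g`. -/
def partialSum (k : Ed d → ℝ) (F : Ed d → ((Ed d → ℝ) →ₗ[ℝ] ℝ)) (N : ℕ) (g : Ed d → ℝ) : ℝ :=
  ∑ n ∈ Finset.range N, ∫ y, F y (scaled k y (dyadic n)) * dyadicPiece k g n y

/-- The error made at scale `2⁻ⁿ` when the germ `F` is frozen at the point `x` in `partialSum`. -/
def errorTerm (k : Ed d → ℝ) (F : Ed d → ((Ed d → ℝ) →ₗ[ℝ] ℝ)) (x : Ed d) (g : Ed d → ℝ)
    (n : ℕ) : ℝ :=
  ∫ y, (F y (scaled k y (dyadic n)) - F x (scaled k y (dyadic n))) * dyadicPiece k g n y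

theorem partialSum_succ_eq (hcoh : AlphaGammaCoherent α γ F k) (hF : IsGerm F)
    (hk : IsTestFunction k) (hg : IsTestFunction g) (x : Ed d) (N : ℕ) :
    partialSum k F (N + 1) g = (∑ n ∈ Finset.range (N + 1), errorTerm k F x g n) +
      F x (conv (scaled k 0 (dyadic N)) (conv (scaled k 0 (dyadic (N + 1))) g)) := by
  rw [← sum_conv_dyadicPiece hk hg, map_sum, ← Finset.sum_add_distrib, partialSum]
  refine Finset.sum_congr rfl fun n _ => ?_
  have hhn := hk.dyadicPiece hg n
  have map_conv : F x (conv (scaled k 0 (dyadic n)) (dyadicPiece k g n)) =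
      ∫ y, F x (scaled k y (dyadic n)) * dyadicPiece k g n y := by
    rw [(hF.1 x).map_conv (hk.scaled 0 (dyadic_pos n)) hhn]
    simp only [← scaled_eq_comp_sub]
  rw [map_conv, errorTerm, ← integral_add (hcoh.integrable_sub_mul hF hk (dyadic_mem_Ioc n) x hhn)
    ((hF.1 x).integrable_scaled_mul hk (dyadic_pos n) hhn)]
  simp only [← add_mul, sub_add_cancel]

theorem tendsto_partialSum (hcoh : AlphaGammaCoherent α γ F k) (hF : IsGerm F)
    (hk : IsTestFunction k) (hk_int : ∫ u, k u = 1) (hg : IsTestFunction g) (x : Ed d)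
    (hsum : Summable (errorTerm k F x g)) :
    Tendsto (fun N => partialSum k F N g) atTop (𝓝 ((∑' n, errorTerm k F x g n) + F x g)) := by
  rw [← tendsto_add_atTop_iff_nat 1]
  simp only [partialSum_succ_eq hcoh hF hk hg x]
  exact ((tendsto_add_atTop_iff_nat 1).2 hsum.hasSum.tendsto_sum_nat).add
    ((hF.1 x).tendsto_map_conv_scaled_conv_scaled hk hg hk_int dyadic_pos
      (fun N => dyadic_pos (N + 1)) tendsto_dyadic ((tendsto_add_atTop_iff_nat 1).2 tendsto_dyadic))

theorem partialSum_add (hcoh : AlphaGammaCoherent α γ F k) (hF : IsGerm F)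
    (hk : IsTestFunction k) (hg : IsTestFunction g) (hh : IsTestFunction h) (N : ℕ) :
    partialSum k F N (g + h) = partialSum k F N g + partialSum k F N h := by
  simp only [partialSum, ← Finset.sum_add_distrib]
  refine Finset.sum_congr rfl fun n _ => ?_
  rw [← integral_add (hcoh.integrable_mul hF hk (dyadic_mem_Ioc n) (hk.dyadicPiece hg n))
    (hcoh.integrable_mul hF hk (dyadic_mem_Ioc n) (hk.dyadicPiece hh n)),
    dyadicPiece_add hk hg hh]
  simp only [Pi.add_apply, mul_add]

theorem partialSum_const_smul (k : Ed d → ℝ) (F : Ed d → ((Ed d → ℝ) →ₗ[ℝ] ℝ)) (N : ℕ) (c : ℝ)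
    (g : Ed d → ℝ) : partialSum k F N (c • g) = c * partialSum k F N g := by
  simp only [partialSum, dyadicPiece_const_smul, Pi.smul_apply, smul_eq_mul, mul_left_comm _ c,
    integral_const_mul, Finset.mul_sum]

theorem partialSum_germ_add {F₁ F₂ : Ed d → ((Ed d → ℝ) →ₗ[ℝ] ℝ)}
    (hcoh₁ : AlphaGammaCoherent α γ F₁ k) (hcoh₂ : AlphaGammaCoherent α γ F₂ k) (hF₁ : IsGerm F₁)
    (hF₂ : IsGerm F₂) (hk : IsTestFunction k) (hg : IsTestFunction g) (a b : ℝ) (N : ℕ) :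
    partialSum k (fun x => a • F₁ x + b • F₂ x) N g =
      a * partialSum k F₁ N g + b * partialSum k F₂ N g := by
  simp only [partialSum, Finset.mul_sum, ← Finset.sum_add_distrib]
  refine Finset.sum_congr rfl fun n _ => ?_
  have integrable {F} (hcoh : AlphaGammaCoherent α γ F k) (hF : IsGerm F) (c : ℝ) :=
    (hcoh.integrable_mul hF hk (dyadic_mem_Ioc n) (hk.dyadicPiece hg n)).const_mul c
  rw [← integral_const_mul, ← integral_const_mul,
    ← integral_add (integrable hcoh₁ hF₁ a) (integrable hcoh₂ hF₂ b)]
  simp only [LinearMap.add_apply, LinearMap.smul_apply, smul_eq_mul, add_mul, mul_assoc]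

end DyadicSums

section ErrorBounds

variable {d r : ℕ} {g h k ψ : Ed d → ℝ} {x : Ed d} {l L M R α γ : ℝ}
  {F : Ed d → ((Ed d → ℝ) →ₗ[ℝ] ℝ)}

theorem integral_abs_conv_le (hk : Integrable k) (hh : Integrable h) :
    ∫ y, |conv k h y| ≤ (∫ u, |k u|) * ∫ u, |h u| := by
  have abs_conv_le (y : Ed d) : |conv k h y| ≤ conv (fun u => |k u|) (fun u => |h u|) y := by
    simpa only [conv, abs_mul] using abs_integral_le_integral_abs (f := fun u => k (y - u) * h u)
  have integrable_conv : Integrable (conv (fun u => |k u|) fun u => |h u|) := by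
    rw [conv_eq_convolution]
    exact hh.abs.integrable_convolution _ hk.abs
  calc ∫ y, |conv k h y| ≤ ∫ y, conv (fun u => |k u|) (fun u => |h u|) y :=
      integral_mono_of_nonneg (.of_forall fun _ => abs_nonneg _) integrable_conv
        (.of_forall abs_conv_le)
    _ = (∫ u, |k u|) * ∫ u, |h u| := by
      rw [conv_eq_convolution, integral_convolution _ hh.abs hk.abs,
        ContinuousLinearMap.lsmul_apply, smul_eq_mul, mul_comm]

theorem integral_abs_scaled (ψ : Ed d → ℝ) (x : Ed d) (hl : 0 < l) :
    ∫ y, |scaled ψ x l y| = ∫ y, |ψ y| := by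
  have abs_scaled (y : Ed d) : |scaled ψ x l y| = scaled (fun u => |ψ u|) 0 l (y - x) := by
    simp only [scaled, sub_zero, abs_mul, abs_inv, abs_pow, abs_of_pos hl]
  simp only [abs_scaled]
  rw [integral_sub_right_eq_self (scaled (fun u => |ψ u|) 0 l), integral_scaled _ hl]

theorem integral_abs_le_of_tsupport_subset (hg : tsupport g ⊆ closedBall x l)
    (hM : ∀ y, |g y| ≤ M) : ∫ y, |g y| ≤ M * volume.real (closedBall x l) := by
  have eq_zero (y : Ed d) (hy : y ∉ closedBall x l) : |g y| = 0 := by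
    rw [image_eq_zero_of_notMem_tsupport (mt (@hg y) hy), abs_zero]
  rw [← setIntegral_eq_integral_of_forall_compl_eq_zero eq_zero]
  refine (Real.le_norm_self _).trans
    (norm_setIntegral_le_of_norm_le_const measure_closedBall_lt_top fun y _ => ?_)
  rw [Real.norm_eq_abs, abs_abs]
  exact hM y

theorem tsupport_scaled_subset (hψ : tsupport ψ ⊆ closedBall 0 R) (x : Ed d) (hl : 0 < l) :
    tsupport (scaled ψ x l) ⊆ closedBall x (l * R) := by
  refine closure_minimal (fun y hy => ?_) isClosed_closedBall
  have mem := hψ (subset_tsupport ψ (right_ne_zero_of_mul hy))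
  rwa [mem_closedBall_zero_iff, norm_smul, norm_inv, Real.norm_of_nonneg hl.le, inv_mul_le_iff₀ hl,
    ← mem_closedBall_iff_norm] at mem

theorem norm_iteratedFDeriv_scaled_le (hψ : IsTestFunction ψ) (x : Ed d) (hl : 0 < l)
    (hM : ∀ y, ‖iteratedFDeriv ℝ r ψ y‖ ≤ M) (y : Ed d) :
    ‖iteratedFDeriv ℝ r (scaled ψ x l) y‖ ≤ (l ^ d)⁻¹ * (M * (l ^ r)⁻¹) := by
  have hM0 : 0 ≤ M := (norm_nonneg _).trans (hM 0)
  let dilation : Ed d →L[ℝ] Ed d := l⁻¹ • ContinuousLinearMap.id ℝ (Ed d)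
  have norm_dilation_le : ‖dilation‖ ≤ l⁻¹ := by
    refine (norm_smul_le l⁻¹ (ContinuousLinearMap.id ℝ (Ed d))).trans ?_
    rw [norm_inv, Real.norm_of_nonneg hl.le]
    exact mul_le_of_le_one_right (by positivity) ContinuousLinearMap.norm_id_le
  have scaled_eq : scaled ψ x l = fun z => ((l ^ d)⁻¹ • (ψ ∘ dilation)) (z - x) := rfl
  rw [scaled_eq, iteratedFDeriv_comp_sub, iteratedFDeriv_const_smul_apply
    ((hψ.contDiff_nat r).comp dilation.contDiff).contDiffAt,
    dilation.iteratedFDeriv_comp_right (hψ.contDiff_nat r) _ le_rfl, norm_smul,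
    Real.norm_of_nonneg (by positivity), ← inv_pow l r]
  gcongr
  refine (ContinuousMultilinearMap.norm_compContinuousLinearMap_le _ _).trans ?_
  rw [Finset.prod_const, Finset.card_univ, Fintype.card_fin]
  gcongr
  exact hM _

/-- A bump of order `r` and size `M` at scale `l` around `x`: a test function obeying, up to the
factor `M`, the same bounds as a rescaled test function `ψ_x^l`. -/
structure IsBump (r : ℕ) (x : Ed d) (l M : ℝ) (g : Ed d → ℝ) : Prop where
  isTestFunction : IsTestFunction g
  tsupport_subset : tsupport g ⊆ closedBall x l
  integral_abs_le : ∫ y, |g y| ≤ M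
  norm_iteratedFDeriv_le : ∀ y, ‖iteratedFDeriv ℝ r g y‖ ≤ (l ^ d)⁻¹ * (M * (l ^ r)⁻¹)

theorem IsBump.nonneg (hg : IsBump r x l M g) : 0 ≤ M :=
  (integral_nonneg fun _ => abs_nonneg _).trans hg.integral_abs_le

theorem IsBump.scaled (hψ : IsBump r 0 1 M ψ) (x : Ed d) (hl : 0 < l) :
    IsBump r x l M (scaled ψ x l) where
  isTestFunction := hψ.isTestFunction.scaled x hl
  tsupport_subset := by simpa only [mul_one] using tsupport_scaled_subset hψ.tsupport_subset x hl
  integral_abs_le := (integral_abs_scaled ψ x hl).trans_le hψ.integral_abs_le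
  norm_iteratedFDeriv_le := norm_iteratedFDeriv_scaled_le hψ.isTestFunction x hl
    (by simpa only [one_pow, inv_one, one_mul, mul_one] using hψ.norm_iteratedFDeriv_le)

theorem IsTestFunction.isBump (hg : IsTestFunction g) (hgx : tsupport g ⊆ closedBall x l)
    (hl : 0 < l) (r : ℕ) :
    IsBump r x l ((volume.real (closedBall x l) + l ^ d * l ^ r) * Cnorm r g) g where
  isTestFunction := hg
  tsupport_subset := hgx
  integral_abs_le := by
    refine (integral_abs_le_of_tsupport_subset hgx (hg.abs_le_Cnorm r)).trans ?_
    rw [mul_comm]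
    have := hg.Cnorm_nonneg r
    gcongr
    exact le_add_of_nonneg_right (by positivity)
  norm_iteratedFDeriv_le y := by
    refine (hg.norm_iteratedFDeriv_le_Cnorm le_rfl y).trans ?_
    have := hg.Cnorm_nonneg r
    calc Cnorm r g = (l ^ d)⁻¹ * ((l ^ d * l ^ r) * Cnorm r g * (l ^ r)⁻¹) := by field_simp
      _ ≤ _ := by
        gcongr
        exact le_add_of_nonneg_left measureReal_nonneg

theorem tsupport_dyadicPiece_subset (hR : tsupport k ⊆ closedBall 0 R) (hR0 : 0 ≤ R)
    (hg : tsupport g ⊆ closedBall x l) (n : ℕ) :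
    tsupport (dyadicPiece k g n) ⊆ closedBall x (l + 2 * R * dyadic n) := by
  have conv_subset {m : ℕ} (hm : dyadic m ≤ 2 * dyadic n) :
      tsupport (conv (scaled k 0 (dyadic m)) g) ⊆ closedBall x (l + 2 * R * dyadic n) := by
    refine (tsupport_conv_subset (tsupport_scaled_subset hR 0 (dyadic_pos m)) hg).trans ?_
    rw [zero_add]
    exact closedBall_subset_closedBall (by nlinarith)
  cases n with
  | zero => exact conv_subset (by linarith [dyadic_eq_two_mul_succ 0, dyadic_pos 1])
  | succ n =>
    refine (tsupport_sub _ _).trans (union_subset (conv_subset ?_) (conv_subset ?_))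
    · linarith [dyadic_eq_two_mul_succ (n + 1), dyadic_pos (n + 2)]
    · exact (dyadic_eq_two_mul_succ n).le

theorem integral_abs_dyadicPiece_le (hk : IsTestFunction k) (hg : IsTestFunction g) (n : ℕ) :
    ∫ y, |dyadicPiece k g n y| ≤ 2 * ((∫ u, |k u|) * ∫ u, |g u|) := by
  have integral_conv_le (m : ℕ) :
      ∫ y, |conv (scaled k 0 (dyadic m)) g y| ≤ (∫ u, |k u|) * ∫ u, |g u| := by
    rw [← integral_abs_scaled k 0 (dyadic_pos m)]
    exact integral_abs_conv_le (hk.scaled 0 (dyadic_pos m)).integrable hg.integrable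
  cases n with
  | zero => exact (integral_conv_le 1).trans (le_mul_of_one_le_left (by positivity) one_le_two)
  | succ n =>
    have integrable (m : ℕ) : Integrable fun y => |conv (scaled k 0 (dyadic m)) g y| :=
      ((hk.scaled 0 (dyadic_pos m)).conv hg).integrable.abs
    calc ∫ y, |dyadicPiece k g (n + 1) y|
      _ ≤ ∫ y, (|conv (scaled k 0 (dyadic (n + 2))) g y| + |conv (scaled k 0 (dyadic n)) g y|) :=
        integral_mono_of_nonneg (.of_forall fun _ => abs_nonneg _)
          ((integrable _).add (integrable _)) (.of_forall fun _ => abs_sub _ _)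
      _ ≤ 2 * ((∫ u, |k u|) * ∫ u, |g u|) := by
        rw [integral_add (integrable _) (integrable _), two_mul]
        exact add_le_add (integral_conv_le _) (integral_conv_le _)

theorem IsKernelOfOrder.exists_abs_dyadicPiece_succ_le (hk : IsKernelOfOrder r k) :
    ∃ C : ℝ, 0 ≤ C ∧ ∀ g, IsTestFunction g → ∀ M : ℝ, (∀ x, ‖iteratedFDeriv ℝ r g x‖ ≤ M) →
      ∀ n y, |dyadicPiece k g (n + 1) y| ≤ C * dyadic (n + 1) ^ r * M := by
  obtain ⟨C, hC0, hC⟩ := hk.exists_abs_conv_sub_le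
  refine ⟨2 * (C * 2 ^ r), by positivity, fun g hg M hM n y => ?_⟩
  have hM0 : 0 ≤ M := (norm_nonneg _).trans (hM 0)
  have conv_sub_le {m : ℕ} (hm : dyadic m ≤ 2 * dyadic (n + 1)) :
      |conv (scaled k 0 (dyadic m)) g y - g y| ≤ C * 2 ^ r * dyadic (n + 1) ^ r * M := by
    have := dyadic_pos m
    rw [mul_assoc C, ← mul_pow]
    refine (hC _ (dyadic_pos m) g hg M hM y).trans ?_
    gcongr
  have coarse := conv_sub_le (dyadic_eq_two_mul_succ n).le
  have fine := conv_sub_le (m := n + 2)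
    (by linarith [dyadic_eq_two_mul_succ (n + 1), dyadic_pos (n + 2)])
  calc |dyadicPiece k g (n + 1) y|
    _ ≤ |conv (scaled k 0 (dyadic (n + 2))) g y - g y| +
        |g y - conv (scaled k 0 (dyadic n)) g y| := abs_sub_le _ _ _
    _ ≤ 2 * (C * 2 ^ r) * dyadic (n + 1) ^ r * M := by
      rw [abs_sub_comm (g y)]
      linarith

theorem AlphaGammaCoherent.exists_abs_errorTerm_le (hcoh : AlphaGammaCoherent α γ F k)
    (hαγ : α ≤ γ) (hk : IsTestFunction k) (hR : tsupport k ⊆ closedBall 0 R) (hR0 : 0 ≤ R)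
    {K : Set (Ed d)} (hK : IsCompact K) (L : ℝ) :
    ∃ C : ℝ, 0 ≤ C ∧ ∀ x ∈ K, ∀ l ∈ Ioc 0 L, ∀ g, IsTestFunction g →
      tsupport g ⊆ closedBall x l → ∀ n, |errorTerm k F x g n| ≤
        C * (dyadic n ^ α * (l + 2 * R * dyadic n + dyadic n) ^ (γ - α)) *
          ∫ y, |dyadicPiece k g n y| := by
  obtain ⟨C, hC0, hC⟩ := hcoh.exists_nonneg (hK.cthickening (r := L + 2 * R))
  refine ⟨C, hC0, fun x hx l hl g hg hgx n => ?_⟩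
  have ⟨dyadic_pos, dyadic_le_one⟩ := dyadic_mem_Ioc n
  have hl0 := hl.1
  have mem_cthickening {y : Ed d} (hy : dist y x ≤ l + 2 * R * dyadic n) :
      y ∈ cthickening (L + 2 * R) K := by
    refine mem_cthickening_of_dist_le y x _ _ hx (hy.trans (add_le_add hl.2 ?_))
    exact mul_le_of_le_one_right (by positivity) dyadic_le_one
  have integrable := (hk.dyadicPiece hg n).integrable.abs
  rw [← integral_const_mul, ← Real.norm_eq_abs, errorTerm]
  refine norm_integral_le_of_norm_le (integrable.const_mul _) (.of_forall fun y => ?_)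
  rw [norm_mul, Real.norm_eq_abs, Real.norm_eq_abs]
  by_cases hy : y ∈ tsupport (dyadicPiece k g n)
  · have dist_le : dist y x ≤ l + 2 * R * dyadic n := tsupport_dyadicPiece_subset hR hR0 hgx n hy
    rw [abs_sub_comm, ← mul_assoc C]
    gcongr
    refine (hC y (mem_cthickening dist_le) x (mem_cthickening ?_) _ (dyadic_mem_Ioc n)).trans ?_
    · rw [dist_self]
      positivity
    · rw [← dist_eq_norm, dist_comm]
      gcongr
  · simp only [image_eq_zero_of_notMem_tsupport hy, abs_zero, mul_zero, le_refl]

theorem rpow_mul_rpow_le {e A ρ s : ℝ} (hαγ : α ≤ γ) (he : 0 < e) (hs : 0 < s) (hA : 0 ≤ A)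
    (hρ0 : 0 ≤ ρ) (hρ : ρ ≤ A * s) :
    e ^ α * ρ ^ (γ - α) ≤ A ^ (γ - α) * (e ^ α * s ^ (γ - α)) := by
  rw [mul_left_comm, ← Real.mul_rpow hA hs.le]
  gcongr

theorem AlphaGammaCoherent.exists_abs_errorTerm_le_coarse (hcoh : AlphaGammaCoherent α γ F k)
    (hαγ : α ≤ γ) (hk : IsTestFunction k) {K : Set (Ed d)} (hK : IsCompact K) (r : ℕ)
    (hL : 0 ≤ L) :
    ∃ C : ℝ, 0 ≤ C ∧ ∀ x ∈ K, ∀ l ∈ Ioc 0 L, ∀ M g, IsBump r x l M g →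
      ∀ n, l ≤ L * dyadic n → |errorTerm k F x g n| ≤ C * M * dyadic n ^ γ := by
  obtain ⟨R, hR0, hR⟩ := hk.2.isCompact.isBounded.subset_closedBall_lt 0 0
  obtain ⟨C, hC0, hC⟩ := hcoh.exists_abs_errorTerm_le hαγ hk hR hR0.le hK L
  refine ⟨C * (L + 2 * R + 1) ^ (γ - α) * (2 * ∫ u, |k u|), by positivity, ?_⟩
  intro x hx l hl M g hg n hn
  have hl0 := hl.1
  have hn0 := dyadic_pos n
  have germ_le := rpow_mul_rpow_le (A := L + 2 * R + 1) (s := dyadic n)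
    (ρ := l + 2 * R * dyadic n + dyadic n) hαγ hn0 hn0 (by positivity) (by positivity)
    (by linarith)
  rw [← Real.rpow_add hn0, add_sub_cancel] at germ_le
  calc |errorTerm k F x g n|
    _ ≤ C * (dyadic n ^ α * (l + 2 * R * dyadic n + dyadic n) ^ (γ - α)) *
        ∫ y, |dyadicPiece k g n y| := hC x hx l hl g hg.isTestFunction hg.tsupport_subset n
    _ ≤ C * ((L + 2 * R + 1) ^ (γ - α) * dyadic n ^ γ) * (2 * ((∫ u, |k u|) * M)) := by
      gcongr
      refine (integral_abs_dyadicPiece_le hk hg.isTestFunction n).trans ?_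
      gcongr
      exact hg.integral_abs_le
    _ = _ := by ring

theorem IsKernelOfOrder.exists_integral_abs_dyadicPiece_succ_le (hk : IsKernelOfOrder r k) :
    ∃ A : ℝ, ∀ x l M g, 0 < l → IsBump r x l M g → ∀ n, dyadic (n + 1) ≤ l →
      ∫ y, |dyadicPiece k g (n + 1) y| ≤ A * M * (dyadic (n + 1) ^ r * (l ^ r)⁻¹) := by
  obtain ⟨R, hR0, hR⟩ := hk.isTestFunction.2.isCompact.isBounded.subset_closedBall_lt 0 0
  obtain ⟨C, hC0, hC⟩ := hk.exists_abs_dyadicPiece_succ_le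
  refine ⟨C * ((1 + 2 * R) ^ d * volume.real (closedBall (0 : Ed d) 1)),
    fun x l M g hl hg n hn => ?_⟩
  have hM := hg.nonneg
  have hn0 := dyadic_pos (n + 1)
  calc ∫ y, |dyadicPiece k g (n + 1) y|
    _ ≤ C * dyadic (n + 1) ^ r * ((l ^ d)⁻¹ * (M * (l ^ r)⁻¹)) *
        volume.real (closedBall x (l + 2 * R * dyadic (n + 1))) :=
      integral_abs_le_of_tsupport_subset
        (tsupport_dyadicPiece_subset hR hR0.le hg.tsupport_subset _)
        (hC g hg.isTestFunction _ hg.norm_iteratedFDeriv_le n)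
    _ = C * dyadic (n + 1) ^ r * ((l ^ d)⁻¹ * (M * (l ^ r)⁻¹)) *
        ((l + 2 * R * dyadic (n + 1)) ^ d * volume.real (closedBall (0 : Ed d) 1)) := by
      rw [Measure.addHaar_real_closedBall' _ _ (by positivity), finrank_euclideanSpace,
        Fintype.card_fin]
    _ ≤ C * dyadic (n + 1) ^ r * ((l ^ d)⁻¹ * (M * (l ^ r)⁻¹)) *
        (((1 + 2 * R) * l) ^ d * volume.real (closedBall (0 : Ed d) 1)) := by
      gcongr
      nlinarith
    _ = _ := by
      rw [mul_pow]
      field_simp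

theorem AlphaGammaCoherent.exists_abs_errorTerm_le_fine (hcoh : AlphaGammaCoherent α γ F k)
    (hαγ : α ≤ γ) (hk : IsKernelOfOrder r k) {K : Set (Ed d)} (hK : IsCompact K) (L : ℝ) :
    ∃ C : ℝ, ∀ x ∈ K, ∀ l ∈ Ioc 0 L, ∀ M g, IsBump r x l M g →
      ∀ n, dyadic (n + 1) ≤ l → |errorTerm k F x g (n + 1)| ≤
        C * M * (dyadic (n + 1) ^ (α + r) * l ^ (γ - (α + r))) := by
  obtain ⟨R, hR0, hR⟩ := hk.isTestFunction.2.isCompact.isBounded.subset_closedBall_lt 0 0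
  obtain ⟨C, hC0, hC⟩ := hcoh.exists_abs_errorTerm_le hαγ hk.isTestFunction hR hR0.le hK L
  obtain ⟨A, hA⟩ := hk.exists_integral_abs_dyadicPiece_succ_le
  refine ⟨C * (2 + 2 * R) ^ (γ - α) * A, fun x hx l hl M g hg n hn => ?_⟩
  have hl0 := hl.1
  have := hg.nonneg
  have hn0 := dyadic_pos (n + 1)
  have germ_le := rpow_mul_rpow_le (A := 2 + 2 * R) (s := l)
    (ρ := l + 2 * R * dyadic (n + 1) + dyadic (n + 1)) hαγ hn0 hl0 (by positivity) (by positivity)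
    (by nlinarith)
  calc |errorTerm k F x g (n + 1)|
    _ ≤ C * (dyadic (n + 1) ^ α * (l + 2 * R * dyadic (n + 1) + dyadic (n + 1)) ^ (γ - α)) *
        ∫ y, |dyadicPiece k g (n + 1) y| := hC x hx l hl g hg.isTestFunction hg.tsupport_subset _
    _ ≤ C * ((2 + 2 * R) ^ (γ - α) * (dyadic (n + 1) ^ α * l ^ (γ - α))) *
        (A * M * (dyadic (n + 1) ^ r * (l ^ r)⁻¹)) := by
      gcongr
      exact hA x l M g hl0 hg n hn
    _ = _ := by
      rw [Real.rpow_add hn0, Real.rpow_natCast, ← sub_sub, Real.rpow_sub hl0 (γ - α),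
        Real.rpow_natCast]
      ring

end ErrorBounds

section DyadicSeries

variable {a : ℕ → ℝ} {B l L s γ : ℝ}

/-- The rate of the reconstruction bound of a germ of coherence exponent `γ ≤ 0`. The logarithm at
`γ = 0` counts the dyadic scales between `l` and `1`. -/
def reconstructionRate (γ l : ℝ) : ℝ := if γ = 0 then 1 + |Real.log l| else l ^ γ

theorem rpow_le_reconstructionRate (γ l : ℝ) : l ^ γ ≤ reconstructionRate γ l := by
  rw [reconstructionRate]
  split_ifs with h
  · rw [h, Real.rpow_zero]
    exact le_add_of_nonneg_right (abs_nonneg _)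
  · exact le_rfl

theorem dyadic_rpow (n : ℕ) (s : ℝ) : dyadic n ^ s = ((1 / 2 : ℝ) ^ s) ^ n := by
  rw [dyadic, Real.rpow_pow_comm (by norm_num)]

theorem summable_dyadic_rpow (hs : 0 < s) : Summable fun n => dyadic n ^ s := by
  simp only [dyadic_rpow]
  exact summable_geometric_of_lt_one (by positivity)
    (Real.rpow_lt_one (by norm_num) (by norm_num) hs)

theorem exists_dyadic_le (hl : l ∈ Ioc 0 L) (hL : 1 ≤ L) :
    ∃ N, dyadic (N + 1) ≤ l ∧ l ≤ L * dyadic N := by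
  obtain hl1 | hl1 := le_total l 1
  · obtain ⟨N, lower, upper⟩ := exists_nat_pow_near_of_lt_one hl.1 hl1 one_half_pos one_half_lt_one
    exact ⟨N, lower.le, upper.trans (le_mul_of_one_le_left (dyadic_pos N).le hL)⟩
  · exact ⟨0, (dyadic_le_one 1).trans hl1, by simpa only [dyadic_zero, mul_one] using hl.2⟩

theorem natCast_mul_log_two_le (hl : 0 < l) (hL : 0 < L) {N : ℕ} (hN : l ≤ L * dyadic N) :
    N * Real.log 2 ≤ |Real.log L| + |Real.log l| := by
  have log_le := Real.log_le_log hl hN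
  rw [Real.log_mul hL.ne' (dyadic_pos N).ne', dyadic, Real.log_pow, one_div, Real.log_inv]
    at log_le
  linarith [le_abs_self (Real.log L), neg_abs_le (Real.log l)]

theorem exists_sum_dyadic_rpow_le (hγ : γ ≤ 0) (hL : 0 < L) :
    ∃ H : ℝ, ∀ N l, 0 < l → l ≤ L * dyadic N →
      ∑ n ∈ Finset.range (N + 1), dyadic n ^ γ ≤ H * reconstructionRate γ l := by
  obtain rfl | hγ := hγ.eq_or_lt
  · have log_two_pos : 0 < Real.log 2 := Real.log_pos one_lt_two
    refine ⟨1 + (1 + |Real.log L|) / Real.log 2, fun N l hl hN => ?_⟩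
    have count_le := natCast_mul_log_two_le hl hL hN
    rw [← le_div_iff₀ log_two_pos] at count_le
    simp only [Real.rpow_zero, Finset.sum_const, Finset.card_range, nsmul_eq_mul, mul_one,
      reconstructionRate, if_true, Nat.cast_add_one]
    calc (N : ℝ) + 1
      _ ≤ (|Real.log L| + |Real.log l|) / Real.log 2 + 1 := by gcongr
      _ ≤ ((1 + |Real.log L|) * (1 + |Real.log l|)) / Real.log 2 + (1 + |Real.log l|) := by
        gcongr
        · nlinarith [abs_nonneg (Real.log L), abs_nonneg (Real.log l)]
        · exact le_add_of_nonneg_right (abs_nonneg _)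
      _ = _ := by ring
  · set q : ℝ := (1 / 2) ^ γ with hq
    have one_lt_q : 1 < q :=
      Real.one_lt_rpow_of_pos_of_lt_one_of_neg one_half_pos one_half_lt_one hγ
    have : 0 < q - 1 := sub_pos.2 one_lt_q
    refine ⟨q * L ^ (-γ) / (q - 1), fun N l hl hN => ?_⟩
    have last_le : dyadic N ^ γ ≤ L ^ (-γ) * l ^ γ := by
      have div_le : l / L ≤ dyadic N := (div_le_iff₀' hL).2 hN
      rw [Real.rpow_neg hL.le, ← div_eq_inv_mul, ← Real.div_rpow hl.le hL.le]
      exact Real.rpow_le_rpow_of_nonpos (by positivity) div_le hγ.le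
    simp only [reconstructionRate, hγ.ne, if_false]
    simp only [dyadic_rpow, ← hq] at last_le ⊢
    rw [geom_sum_eq one_lt_q.ne', div_mul_eq_mul_div, pow_succ']
    gcongr
    nlinarith

theorem abs_dyadic_tail_le (hs : 0 ≤ s) (hl : 0 < l) (hB : 0 ≤ B)
    (fine : ∀ n, dyadic (n + 1) ≤ l → |a (n + 1)| ≤ B * (dyadic (n + 1) ^ s * l ^ (γ - s)))
    {N : ℕ} (hN : dyadic (N + 1) ≤ l) (i : ℕ) :
    ‖a (i + (N + 1))‖ ≤ B * l ^ γ * dyadic i ^ s := by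
  have dyadic_add : dyadic (i + (N + 1)) = dyadic i * dyadic (N + 1) := pow_add _ _ _
  have hi0 := dyadic_pos i
  have hN0 := dyadic_pos (N + 1)
  have dyadic_le : dyadic (i + (N + 1)) ≤ l := by
    rw [dyadic_add]
    exact (mul_le_of_le_one_left hN0.le (dyadic_le_one i)).trans hN
  calc ‖a (i + (N + 1))‖
    _ ≤ B * ((dyadic i * dyadic (N + 1)) ^ s * l ^ (γ - s)) := by
      rw [← dyadic_add]
      exact fine (i + N) dyadic_le
    _ ≤ B * ((dyadic i * l) ^ s * l ^ (γ - s)) := by gcongr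
    _ = B * l ^ γ * dyadic i ^ s := by
      rw [Real.mul_rpow hi0.le hl.le, mul_assoc (dyadic i ^ s), ← Real.rpow_add hl,
        add_sub_cancel]
      ring

theorem exists_summable_and_abs_tsum_le (hγ : γ ≤ 0) (hs : 0 < s) (hL : 1 ≤ L) :
    ∃ C : ℝ, ∀ (a : ℕ → ℝ) (B l : ℝ), 0 ≤ B → l ∈ Ioc 0 L →
      (∀ n, l ≤ L * dyadic n → |a n| ≤ B * dyadic n ^ γ) →
      (∀ n, dyadic (n + 1) ≤ l → |a (n + 1)| ≤ B * (dyadic (n + 1) ^ s * l ^ (γ - s))) →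
      Summable a ∧ |∑' n, a n| ≤ C * B * reconstructionRate γ l := by
  have hL0 : 0 < L := one_pos.trans_le hL
  obtain ⟨H, hH⟩ := exists_sum_dyadic_rpow_le hγ hL0
  set S := ∑' n, dyadic n ^ s
  have hS0 : 0 ≤ S := tsum_nonneg fun n => Real.rpow_nonneg (dyadic_pos n).le s
  refine ⟨H + S, fun a B l hB hl coarse fine => ?_⟩
  have hl0 := hl.1
  obtain ⟨N, le_l, l_le⟩ := exists_dyadic_le hl hL
  have tail_le := abs_dyadic_tail_le hs.le hl.1 hB fine le_l
  have summable_bound := (summable_dyadic_rpow hs).mul_left (B * l ^ γ)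
  have summable : Summable a :=
    (summable_nat_add_iff (N + 1)).1 (summable_bound.of_norm_bounded tail_le)
  refine ⟨summable, ?_⟩
  have abs_tail_le : |∑' i, a (i + (N + 1))| ≤ B * l ^ γ * S := by
    rw [← tsum_mul_left]
    exact tsum_of_norm_bounded summable_bound.hasSum tail_le
  have abs_head_le :
      |∑ n ∈ Finset.range (N + 1), a n| ≤ B * ∑ n ∈ Finset.range (N + 1), dyadic n ^ γ := by
    rw [Finset.mul_sum]
    refine (Finset.abs_sum_le_sum_abs _ _).trans (Finset.sum_le_sum fun n hn => coarse n ?_)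
    refine l_le.trans (mul_le_mul_of_nonneg_left (dyadic_antitone ?_) hL0.le)
    exact Finset.mem_range_succ_iff.1 hn
  rw [← summable.sum_add_tsum_nat_add (N + 1)]
  calc _ ≤ B * (H * reconstructionRate γ l) + B * reconstructionRate γ l * S := by
        refine (abs_add_le _ _).trans (add_le_add (abs_head_le.trans ?_) (abs_tail_le.trans ?_))
        · gcongr
          exact hH N l hl0 l_le
        · gcongr
          exact rpow_le_reconstructionRate γ l
    _ = _ := by ring

end DyadicSeries

section Reconstruction

variable {d r : ℕ} {g k ψ : Ed d → ℝ} {x : Ed d} {l L M α γ : ℝ}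
  {F F₁ F₂ : Ed d → ((Ed d → ℝ) →ₗ[ℝ] ℝ)} {T : (Ed d → ℝ) →ₗ[ℝ] ℝ}

theorem IsTestFunction.Cnorm_mono (hg : IsTestFunction g) : Monotone fun r => Cnorm r g :=
  fun _ _ hr => Cnorm_le fun _ hi x => hg.norm_iteratedFDeriv_le_Cnorm (hi.trans hr) x

theorem IsBump.mono {M' : ℝ} (hg : IsBump r x l M g) (hl : 0 < l) (hM : M ≤ M') :
    IsBump r x l M' g where
  isTestFunction := hg.isTestFunction
  tsupport_subset := hg.tsupport_subset
  integral_abs_le := hg.integral_abs_le.trans hM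
  norm_iteratedFDeriv_le y := (hg.norm_iteratedFDeriv_le y).trans (by gcongr)

theorem Br.isBump_scaled {r' : ℕ} (hψ : Br r' ψ) (hr : r ≤ r') (x : Ed d) (hl : 0 < l) :
    IsBump r x l (volume.real (closedBall (0 : Ed d) 1) + 1) (scaled ψ x l) := by
  obtain ⟨smooth, support, Cnorm_le_one⟩ := hψ
  refine ((smooth.isBump support one_pos r).mono one_pos ?_).scaled x hl
  rw [one_pow, one_pow, one_mul]
  exact mul_le_of_le_one_right (by positivity) ((smooth.Cnorm_mono hr).trans Cnorm_le_one)

theorem AlphaGammaCoherent.exists_summable_errorTerm_and_abs_tsum_le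
    (hcoh : AlphaGammaCoherent α γ F k) (hαγ : α ≤ γ) (hγ : γ ≤ 0) (hk : IsKernelOfOrder r k)
    (hr : 0 < α + r) {K : Set (Ed d)} (hK : IsCompact K) (hL : 1 ≤ L) :
    ∃ C : ℝ, ∀ x ∈ K, ∀ l ∈ Ioc 0 L, ∀ M g, IsBump r x l M g →
      Summable (errorTerm k F x g) ∧
        |∑' n, errorTerm k F x g n| ≤ C * M * reconstructionRate γ l := by
  obtain ⟨A, hA0, hA⟩ := hcoh.exists_abs_errorTerm_le_coarse hαγ hk.isTestFunction hK r
    (zero_le_one.trans hL)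
  obtain ⟨B, hB⟩ := hcoh.exists_abs_errorTerm_le_fine hαγ hk hK L
  obtain ⟨C, hC⟩ := exists_summable_and_abs_tsum_le hγ hr hL
  refine ⟨C * max A B, fun x hx l hl M g hg => ?_⟩
  have hM := hg.nonneg
  have hl0 := hl.1
  rw [mul_assoc C]
  refine hC _ _ l (by positivity) hl (fun n hn => (hA x hx l hl M g hg n hn).trans ?_)
    fun n hn => (hB x hx l hl M g hg n hn).trans ?_
  · have := dyadic_pos n
    gcongr
    exact le_max_left A B
  · have := dyadic_pos (n + 1)
    gcongr
    exact le_max_right A B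

/-- `T` is the limit of `partialSum k F` on test functions. -/
def IsLimitFunctional (k : Ed d → ℝ) (F : Ed d → ((Ed d → ℝ) →ₗ[ℝ] ℝ))
    (T : (Ed d → ℝ) →ₗ[ℝ] ℝ) : Prop :=
  ∀ g, IsTestFunction g → Tendsto (fun N => partialSum k F N g) atTop (𝓝 (T g))

theorem exists_isLimitFunctional (hcoh : AlphaGammaCoherent α γ F k) (hF : IsGerm F)
    (hk : IsTestFunction k)
    (hlim : ∀ g, IsTestFunction g → ∃ t, Tendsto (fun N => partialSum k F N g) atTop (𝓝 t)) :
    ∃ T, IsLimitFunctional k F T := by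
  choose! t ht using hlim
  have isTestFunction (g : testFunctionsIn (univ : Set (Ed d))) : IsTestFunction (g : Ed d → ℝ) :=
    g.2.1
  let limit : testFunctionsIn (univ : Set (Ed d)) →ₗ[ℝ] ℝ :=
    { toFun := fun g => t g
      map_add' := fun g h => tendsto_nhds_unique (ht _ (isTestFunction (g + h)))
        (((ht _ (isTestFunction g)).add (ht _ (isTestFunction h))).congr fun N =>
          (partialSum_add hcoh hF hk (isTestFunction g) (isTestFunction h) N).symm)
      map_smul' := fun c g => tendsto_nhds_unique (ht _ (isTestFunction (c • g)))
        (((ht _ (isTestFunction g)).const_mul c).congr fun N =>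
          (partialSum_const_smul k F N c g).symm) }
  obtain ⟨T, hT⟩ := limit.exists_extend
  refine ⟨T, fun g hg => ?_⟩
  have T_eq : T g = t g := LinearMap.congr_fun hT ⟨g, hg, subset_univ _⟩
  rw [T_eq]
  exact ht g hg

/-- The reconstruction of the germ `F` by means of the smoothing kernel `k`: a choice of limit
functional, which is determined by `k` and `F` on test functions only. -/
def reconstruction (k : Ed d → ℝ) (F : Ed d → ((Ed d → ℝ) →ₗ[ℝ] ℝ)) : (Ed d → ℝ) →ₗ[ℝ] ℝ :=
  Classical.epsilon (IsLimitFunctional k F)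

theorem isLimitFunctional_reconstruction (hcoh : AlphaGammaCoherent α γ F k) (hF : IsGerm F)
    (hαγ : α ≤ γ) (hγ : γ ≤ 0) (hk : IsKernelOfOrder r k) (hr : 0 < α + r) :
    IsLimitFunctional k F (reconstruction k F) := by
  refine Classical.epsilon_spec
    (exists_isLimitFunctional hcoh hF hk.isTestFunction fun g hg => ?_)
  obtain ⟨L, hL, support⟩ := hg.2.isCompact.isBounded.subset_closedBall_lt 1 0
  have hL0 : 0 < L := one_pos.trans hL
  obtain ⟨C, hC⟩ := hcoh.exists_summable_errorTerm_and_abs_tsum_le hαγ hγ hk hr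
    (isCompact_singleton (x := (0 : Ed d))) hL.le
  have summable := (hC 0 rfl L ⟨hL0, le_rfl⟩ _ g (hg.isBump support hL0 r)).1
  exact ⟨_, tendsto_partialSum hcoh hF hk.isTestFunction hk.integral_eq_one hg 0 summable⟩

theorem exists_abs_reconstruction_sub_le (hcoh : AlphaGammaCoherent α γ F k) (hF : IsGerm F)
    (hαγ : α ≤ γ) (hγ : γ ≤ 0) (hk : IsKernelOfOrder r k) (hr : 0 < α + r) {K : Set (Ed d)}
    (hK : IsCompact K) (hL : 1 ≤ L) :
    ∃ C : ℝ, ∀ x ∈ K, ∀ l ∈ Ioc 0 L, ∀ M g, IsBump r x l M g →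
      |reconstruction k F g - F x g| ≤ C * M * reconstructionRate γ l := by
  obtain ⟨C, hC⟩ := hcoh.exists_summable_errorTerm_and_abs_tsum_le hαγ hγ hk hr hK hL
  refine ⟨C, fun x hx l hl M g hg => ?_⟩
  obtain ⟨summable, abs_tsum_le⟩ := hC x hx l hl M g hg
  rwa [tendsto_nhds_unique
    (isLimitFunctional_reconstruction hcoh hF hαγ hγ hk hr g hg.isTestFunction)
    (tendsto_partialSum hcoh hF hk.isTestFunction hk.integral_eq_one hg.isTestFunction x summable),
    add_sub_cancel_right]

theorem isDistribution_reconstruction (hcoh : AlphaGammaCoherent α γ F k) (hF : IsGerm F)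
    (hαγ : α ≤ γ) (hγ : γ ≤ 0) (hk : IsKernelOfOrder r k) (hr : 0 < α + r) :
    IsDistribution (reconstruction k F) := by
  intro K hK
  obtain ⟨L, hL, K_subset⟩ := hK.isBounded.subset_closedBall_lt 1 0
  have hL0 : 0 < L := one_pos.trans hL
  obtain ⟨A, hA⟩ := exists_abs_reconstruction_sub_le hcoh hF hαγ hγ hk hr
    (isCompact_singleton (x := (0 : Ed d))) hL.le
  obtain ⟨m, B, hB⟩ := hF.1 0 K hK
  set v := volume.real (closedBall (0 : Ed d) L) + L ^ d * L ^ r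
  refine ⟨max r m, |A * v * reconstructionRate γ L| + |B|, fun g hg hgK => ?_⟩
  calc |reconstruction k F g|
    _ ≤ |reconstruction k F g - F 0 g| + |F 0 g| := by
      simpa only [sub_add_cancel] using abs_add_le (reconstruction k F g - F 0 g) (F 0 g)
    _ ≤ A * v * reconstructionRate γ L * Cnorm r g + B * Cnorm m g := by
      refine add_le_add ?_ (hB g hg hgK)
      refine (hA 0 rfl L ⟨hL0, le_rfl⟩ _ g (hg.isBump (hgK.trans K_subset) hL0 r)).trans_eq ?_
      ring
    _ ≤ |A * v * reconstructionRate γ L| * Cnorm (max r m) g + |B| * Cnorm (max r m) g := by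
      have := hg.Cnorm_nonneg
      gcongr ?_ * ?_ + ?_ * ?_
      · exact this r
      · exact le_abs_self _
      · exact hg.Cnorm_mono (le_max_left r m)
      · exact this m
      · exact le_abs_self B
      · exact hg.Cnorm_mono (le_max_right r m)
    _ = _ := (add_mul _ _ _).symm

theorem IsLimitFunctional.reconstruction_apply (hT : IsLimitFunctional k F T)
    (hg : IsTestFunction g) : reconstruction k F g = T g :=
  tendsto_nhds_unique (Classical.epsilon_spec ⟨T, hT⟩ g hg) (hT g hg)

theorem reconstruction_germ_add (hcoh₁ : AlphaGammaCoherent α γ F₁ k)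
    (hcoh₂ : AlphaGammaCoherent α γ F₂ k) (hF₁ : IsGerm F₁) (hF₂ : IsGerm F₂)
    (hαγ : α ≤ γ) (hγ : γ ≤ 0) (hk : IsKernelOfOrder r k) (hr : 0 < α + r) (a b : ℝ)
    (hg : IsTestFunction g) :
    reconstruction k (fun x => a • F₁ x + b • F₂ x) g =
      a * reconstruction k F₁ g + b * reconstruction k F₂ g := by
  have limit : IsLimitFunctional k (fun x => a • F₁ x + b • F₂ x)
      (a • reconstruction k F₁ + b • reconstruction k F₂) := by
    intro h hh
    simp only [partialSum_germ_add hcoh₁ hcoh₂ hF₁ hF₂ hk.isTestFunction hh]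
    exact ((isLimitFunctional_reconstruction hcoh₁ hF₁ hαγ hγ hk hr h hh).const_mul a).add
      ((isLimitFunctional_reconstruction hcoh₂ hF₂ hαγ hγ hk hr h hh).const_mul b)
  exact limit.reconstruction_apply hg

end Reconstruction

theorem stmt9_general {d : ℕ} (γ α : ℝ) (hγ : γ ≤ 0) (hαγ : α ≤ γ) (φ : Ed d → ℝ)
    (hφ : IsTestFunction φ) (hφi : ∫ x, φ x ≠ 0) :
    ∃ R : (Ed d → ((Ed d → ℝ) →ₗ[ℝ] ℝ)) → ((Ed d → ℝ) →ₗ[ℝ] ℝ),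
      (∀ F : Ed d → ((Ed d → ℝ) →ₗ[ℝ] ℝ), IsGerm F → AlphaGammaCoherent α γ F φ →
        IsDistribution (R F) ∧
        ∀ K : Set (Ed d), IsCompact K → ∀ r : ℕ, -α < r →
          ∃ C : ℝ, ∀ ψ : Ed d → ℝ, Br r ψ → ∀ x ∈ K, ∀ l ∈ Ioc (0 : ℝ) 1,
            |R F (scaled ψ x l) - F x (scaled ψ x l)| ≤ C * reconstructionRate γ l) ∧
      (∀ F₁ F₂ : Ed d → ((Ed d → ℝ) →ₗ[ℝ] ℝ), ∀ a b : ℝ,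
        IsGerm F₁ → AlphaGammaCoherent α γ F₁ φ → IsGerm F₂ → AlphaGammaCoherent α γ F₂ φ →
        ∀ ψ : Ed d → ℝ, IsTestFunction ψ →
          R (fun x => a • F₁ x + b • F₂ x) ψ = a * R F₁ ψ + b * R F₂ ψ) := by
  obtain ⟨k, hk, coherent⟩ := hφ.exists_isKernelOfOrder hφi ⌊-α⌋₊
  have order_pos : 0 < α + (⌊-α⌋₊ + 1 : ℕ) := by
    push_cast
    linarith [Nat.lt_floor_add_one (-α)]
  refine ⟨reconstruction k, fun F hF hcoh => ⟨isDistribution_reconstruction (coherent hαγ hcoh) hF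
    hαγ hγ hk order_pos, fun K hK r hr => ?_⟩, fun F₁ F₂ a b hF₁ hcoh₁ hF₂ hcoh₂ ψ hψ =>
    reconstruction_germ_add (coherent hαγ hcoh₁) (coherent hαγ hcoh₂) hF₁ hF₂ hαγ hγ hk order_pos
      a b hψ⟩
  have order_le : ⌊-α⌋₊ + 1 ≤ r := (Nat.floor_lt (neg_nonneg.2 (hαγ.trans hγ))).2 hr
  obtain ⟨C, hC⟩ := exists_abs_reconstruction_sub_le (coherent hαγ hcoh) hF hαγ hγ hk order_pos hK
    le_rfl
  exact ⟨_, fun ψ hψ x hx l hl => hC x hx l hl _ _ (hψ.isBump_scaled order_le x hl.1)⟩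

/-- Reconstruction Theorem for γ ≤ 0: existence of a (linear in the germ)
reconstruction with rate λ^γ (or 1 + |log λ| if γ = 0). -/
theorem stmt9 {d : ℕ} (γ α β : ℝ) (hγ : γ ≤ 0) (hαγ : α ≤ γ) (hβ : β ≤ 0)
    (φ : Ed d → ℝ) (hφ : IsTestFunction φ) (hφi : (∫ x, φ x) ≠ 0) :
    ∃ R : (Ed d → ((Ed d → ℝ) →ₗ[ℝ] ℝ)) → ((Ed d → ℝ) →ₗ[ℝ] ℝ),
      (∀ F : Ed d → ((Ed d → ℝ) →ₗ[ℝ] ℝ),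
        IsGerm F → AlphaGammaCoherent α γ F φ → HomBound β F φ →
        IsDistribution (R F) ∧
        ∀ K : Set (Ed d), IsCompact K → ∀ r : ℕ, (r : ℝ) > max (-α) (-β) →
          ∃ C : ℝ, ∀ ψ : Ed d → ℝ, Br r ψ → ∀ x ∈ K, ∀ l ∈ Set.Ioc (0:ℝ) 1,
            |R F (scaled ψ x l) - F x (scaled ψ x l)| ≤
              C * (if γ = 0 then 1 + |Real.log l| else l ^ γ)) ∧
      (∀ F₁ F₂ : Ed d → ((Ed d → ℝ) →ₗ[ℝ] ℝ), ∀ a b : ℝ,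
        IsGerm F₁ → AlphaGammaCoherent α γ F₁ φ → HomBound β F₁ φ →
        IsGerm F₂ → AlphaGammaCoherent α γ F₂ φ → HomBound β F₂ φ →
        ∀ ψ : Ed d → ℝ, IsTestFunction ψ →
          R (fun x => a • F₁ x + b • F₂ x) ψ = a * R F₁ ψ + b * R F₂ ψ) := by
  obtain ⟨R, reconstructs, linear⟩ := stmt9_general γ α hγ hαγ φ hφ hφi
  exact ⟨R, fun F hF hcoh _ => ⟨(reconstructs F hF hcoh).1, fun K hK r hr =>
    (reconstructs F hF hcoh).2 K hK r ((le_max_left _ _).trans_lt hr)⟩,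
    fun F₁ F₂ a b hF₁ hcoh₁ _ hF₂ hcoh₂ _ => linear F₁ F₂ a b hF₁ hcoh₁ hF₂ hcoh₂⟩
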